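/- arXiv:2011.05835 — 6 statements merged into one kernel-verified Lean document; each statement's English description precedes it below -/
import Mathlib

section
/- Let X be an n-dimensional real normed linear space whose closed unit ball B_X has only finitely many extreme points (i.e., X is an n-dimensional polyhedral Banach space). Let F be a face of B_X (a nonempty convex subset F of B_X such that whenever x, y ∈ B_X, t ∈ (0,1) and (1−t)x + t y ∈ F, then x, y ∈ F) that is contained in the unit sphere S_X, and suppose the dimension of F (the dimension of the linear span of the differences v − w of vectors v, w ∈ F) equals i. Then every x in the relative interior of F is (n−i)-smooth, i.e., dim span J(x) = n − i. -/
open Metric Set Module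

/-- `J x` is the set of supporting functionals of `x`. -/
def suppFunctionals {E : Type*} [NormedAddCommGroup E] [NormedSpace ℝ E] (x : E) :
    Set (E →L[ℝ] ℝ) := {f | ‖f‖ = 1 ∧ f x = 1}

/-!
The functionals attaining their maximum over a polytope at a relative interior point `x` of a face
`F` span the annihilator of the direction of `F`. Such a functional is constant on `F`, since its
restriction to `F` is maximal at a relative interior point. Conversely, the vertices outside `F`
have a convex hull disjoint from the affine span of `F`, so strict separation yields a functional
`g` that is constant on `F` and smaller at the other vertices. If `h` annihilates the direction of
`F`, then for large `c` both `c • g` and `c • g + h` attain their maximum at `x`, and `h` is their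
difference. For the unit ball of a normed space and `‖x‖ = 1`, these functionals are the
nonnegative multiples of the norm-one supporting functionals of `x`.
-/

section NormalCone

open Filter Topology StrongDual

lemma finrank_add_finrank_polarSubmodule {𝕜 E : Type*} [NontriviallyNormedField 𝕜]
    [CompleteSpace 𝕜] [AddCommGroup E] [Module 𝕜 E] [TopologicalSpace E]
    [IsTopologicalAddGroup E] [ContinuousSMul 𝕜 E] [T2Space E] [FiniteDimensional 𝕜 E]
    (W : Submodule 𝕜 E) :
    finrank 𝕜 W + finrank 𝕜 (polarSubmodule 𝕜 W) = finrank 𝕜 E := by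
  let e : Dual 𝕜 E ≃ₗ[𝕜] StrongDual 𝕜 E := LinearMap.toContinuousLinearMap
  have polar_eq_map : polarSubmodule 𝕜 W = W.dualAnnihilator.map e.toLinearMap := by
    ext φ
    rw [Submodule.mem_map_equiv, Submodule.mem_dualAnnihilator, mem_polarSubmodule]
    rfl
  rw [polar_eq_map, e.finrank_map_eq, Subspace.finrank_add_finrank_dualAnnihilator_eq]

lemma convexHull_extremePoints_eq_of_finite {E : Type*} [AddCommGroup E] [Module ℝ E]
    [TopologicalSpace E] [T2Space E] [IsTopologicalAddGroup E] [ContinuousSMul ℝ E]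
    [LocallyConvexSpace ℝ E] {K : Set E} (hKc : IsCompact K) (hK : Convex ℝ K)
    (hfin : (extremePoints ℝ K).Finite) : convexHull ℝ (extremePoints ℝ K) = K := by
  rw [← (hfin.isClosed_convexHull ℝ).closure_eq, closure_convexHull_extremePoints hKc hK]

section TopologicalVectorSpace

variable {E : Type*} [AddCommGroup E] [Module ℝ E] [TopologicalSpace E]

/-- The outer normal cone of `s` at a point `x ∈ s`: the continuous linear functionals that attain
their maximum over `s` at `x`. It is kept as a set because only its linear span matters here. -/
def normalCone (s : Set E) (x : E) : Set (StrongDual ℝ E) := {φ | IsMaxOn φ s x}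

variable {S s F : Set E} {x v : E}

lemma mem_normalCone_convexHull {φ : StrongDual ℝ E} :
    φ ∈ normalCone (convexHull ℝ S) x ↔ ∀ y ∈ S, φ y ≤ φ x :=
  ⟨fun hφ _ hy ↦ hφ (subset_convexHull ℝ S hy),
    fun hφ ↦ convexHull_min hφ (convex_halfSpace_le φ.toLinearMap.isLinear (φ x))⟩

lemma exists_smul_add_mem_normalCone_convexHull (hS : S.Finite) {g h : StrongDual ℝ E}
    (hgh : ∀ y ∈ S, g y < g x ∨ g y = g x ∧ h y ≤ h x) :
    ∃ c : ℝ, c • g + h ∈ normalCone (convexHull ℝ S) x := by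
  have eventually_le : ∀ᶠ c : ℝ in atTop, ∀ y ∈ S, (c • g + h) y ≤ (c • g + h) x := by
    refine hS.eventually_all.2 fun y hy ↦ ?_
    simp only [add_apply, smul_apply, smul_eq_mul]
    rcases hgh y hy with hlt | ⟨hg, hh⟩
    · filter_upwards [eventually_ge_atTop ((h y - h x) / (g x - g y))] with c hc
      rw [div_le_iff₀ (sub_pos.2 hlt)] at hc
      linarith
    · exact .of_forall fun c ↦ by rw [hg]; gcongr
  exact eventually_le.exists.imp fun _ ↦ mem_normalCone_convexHull.2

variable [IsTopologicalAddGroup E] [ContinuousSMul ℝ E]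

lemma eventually_add_smul_mem_of_mem_intrinsicInterior (hx : x ∈ intrinsicInterior ℝ s)
    (hv : v ∈ vectorSpan ℝ s) : ∀ᶠ t : ℝ in 𝓝 0, x + t • v ∈ s := by
  obtain ⟨y, hy, rfl⟩ := mem_intrinsicInterior.1 hx
  have mem_span (t : ℝ) : (y : E) + t • v ∈ affineSpan ℝ s := by
    rw [add_comm, ← vadd_eq_add]
    refine AffineSubspace.vadd_mem_of_mem_direction ?_ y.2
    exact (direction_affineSpan ℝ s).symm ▸ Submodule.smul_mem _ t hv
  let line (t : ℝ) : affineSpan ℝ s := ⟨y + t • v, mem_span t⟩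
  have continuous_line : Continuous line := by fun_prop
  have line_zero : line 0 = y := by simp [line]
  exact (continuous_line.tendsto' 0 y line_zero).eventually (mem_interior_iff_mem_nhds.1 hy)

lemma map_eq_zero_of_isMaxOn_of_mem_intrinsicInterior {f : E →ₗ[ℝ] ℝ} (hf : IsMaxOn f s x)
    (hx : x ∈ intrinsicInterior ℝ s) (hv : v ∈ vectorSpan ℝ s) : f v = 0 := by
  have localMax : IsLocalMax (fun t : ℝ ↦ f x + t * f v) 0 := by
    filter_upwards [eventually_add_smul_mem_of_mem_intrinsicInterior hx hv] with t ht
    simpa using hf ht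
  exact localMax.hasDerivAt_eq_zero
    (by simpa using ((hasDerivAt_id (0 : ℝ)).mul_const (f v)).const_add (f x))

lemma inter_affineSpan_subset_of_isExtreme (hF : IsExtreme ℝ s F)
    (hx : x ∈ intrinsicInterior ℝ F) : s ∩ affineSpan ℝ F ⊆ F := by
  rintro y ⟨hys, hyF⟩
  have hxF : x ∈ F := intrinsicInterior_subset hx
  have hxy : x - y ∈ vectorSpan ℝ F :=
    vsub_mem_vectorSpan_of_mem_affineSpan_of_mem_affineSpan (subset_affineSpan ℝ F hxF) hyF
  obtain ⟨t, hzF, ht : 0 < t⟩ :=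
    ((eventually_add_smul_mem_of_mem_intrinsicInterior hx hxy).filter_mono
      nhdsWithin_le_nhds |>.and (self_mem_nhdsWithin (s := Ioi 0))).exists
  have x_mem_openSegment : x ∈ openSegment ℝ (x + t • (x - y)) y := by
    refine ⟨1 / (1 + t), t / (1 + t), by positivity, by positivity, by field_simp, ?_⟩
    match_scalars <;> field_simp
    ring
  exact hF.right_mem_of_mem_openSegment (hF.subset hzF) hys hxF x_mem_openSegment

end TopologicalVectorSpace

section LocallyConvex

variable {E : Type*} [AddCommGroup E] [Module ℝ E] [TopologicalSpace E]
  [IsTopologicalAddGroup E] [ContinuousSMul ℝ E] [LocallyConvexSpace ℝ E]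

lemma exists_mem_polarSubmodule_forall_lt {K : Set E} (hK : Convex ℝ K) (hKc : IsCompact K)
    {A : AffineSubspace ℝ E} (hA : IsClosed (A : Set E)) (hKA : Disjoint K A) {x : E}
    (hx : x ∈ A) : ∃ g ∈ polarSubmodule ℝ A.direction, ∀ y ∈ K, g y < g x := by
  obtain ⟨g, u, c, hgK, huc, hgA⟩ :=
    geometric_hahn_banach_compact_closed hK hKc A.convex hA hKA
  refine ⟨g, (mem_polarSubmodule ℝ _ _).2 fun w hw ↦ ?_, fun y hy ↦
    (hgK y hy).trans (huc.trans (hgA x hx))⟩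
  by_contra hgw
  -- Moving from `x` along `w`, one reaches a point of `A` where `g` takes the value `c`.
  have := hgA _ (AffineSubspace.vadd_mem_of_mem_direction
    (Submodule.smul_mem _ ((c - g x) / g w) hw) hx)
  simp [hgw] at this

variable [T2Space E] {S F : Set E} {x : E}

lemma exists_mem_polarSubmodule_forall_lt_of_isExtreme (hS : S.Finite)
    (hF : IsExtreme ℝ (convexHull ℝ S) F) (hx : x ∈ intrinsicInterior ℝ F) :
    ∃ g ∈ polarSubmodule ℝ (vectorSpan ℝ F), ∀ y ∈ S \ F, g y < g x := by
  have hull_subset : convexHull ℝ (S \ F) ⊆ convexHull ℝ S \ F :=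
    convexHull_min (sdiff_subset_sdiff_left (subset_convexHull ℝ S))
      (hF.convex_sdiff (convex_convexHull ℝ S))
  have disjoint_span : Disjoint (convexHull ℝ (S \ F)) (affineSpan ℝ F : Set E) :=
    disjoint_left.2 fun y hy hyF ↦ (hull_subset hy).2
      (inter_affineSpan_subset_of_isExtreme hF hx ⟨(hull_subset hy).1, hyF⟩)
  have finite_vectorSpan : FiniteDimensional ℝ (affineSpan ℝ F).direction := by
    have := finiteDimensional_direction_affineSpan_of_finite ℝ hS
    rw [← affineSpan_convexHull] at this
    exact Submodule.finiteDimensional_of_le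
      (AffineSubspace.direction_le (affineSpan_mono ℝ hF.subset))
  have isClosed_span : IsClosed (affineSpan ℝ F : Set E) :=
    (AffineSubspace.isClosed_direction_iff _).1 (Submodule.closed_of_finiteDimensional _)
  obtain ⟨g, hg, hlt⟩ := exists_mem_polarSubmodule_forall_lt (convex_convexHull ℝ _)
    ((hS.subset sdiff_subset).isCompact_convexHull ℝ) isClosed_span disjoint_span
    (subset_affineSpan ℝ F (intrinsicInterior_subset hx))
  rw [direction_affineSpan] at hg
  exact ⟨g, hg, fun y hy ↦ hlt y (subset_convexHull ℝ _ hy)⟩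

theorem span_normalCone_convexHull_eq_polarSubmodule (hS : S.Finite)
    (hF : IsExtreme ℝ (convexHull ℝ S) F) (hx : x ∈ intrinsicInterior ℝ F) :
    Submodule.span ℝ (normalCone (convexHull ℝ S) x) = polarSubmodule ℝ (vectorSpan ℝ F) := by
  apply le_antisymm
  · refine Submodule.span_le.2 fun φ hφ ↦ (mem_polarSubmodule ℝ _ _).2 fun v hv ↦ ?_
    exact map_eq_zero_of_isMaxOn_of_mem_intrinsicInterior (f := φ.toLinearMap)
      (IsMaxOn.on_subset hφ hF.subset) hx hv
  · obtain ⟨g, hg, hlt⟩ := exists_mem_polarSubmodule_forall_lt_of_isExtreme hS hF hx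
    have map_eq {φ : StrongDual ℝ E} (hφ : φ ∈ polarSubmodule ℝ (vectorSpan ℝ F)) {y : E}
        (hy : y ∈ F) : φ y = φ x := by
      rw [← sub_eq_zero, ← map_sub]
      exact (mem_polarSubmodule ℝ _ _).1 hφ _
        (vsub_mem_vectorSpan ℝ hy (intrinsicInterior_subset hx))
    have g_mem : g ∈ normalCone (convexHull ℝ S) x := mem_normalCone_convexHull.2 fun y hy ↦ by
      by_cases hyF : y ∈ F
      exacts [(map_eq hg hyF).le, (hlt y ⟨hy, hyF⟩).le]
    intro h hh
    obtain ⟨c, hc⟩ := exists_smul_add_mem_normalCone_convexHull (x := x) (g := g) (h := h) hS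
      fun y hy ↦ by
        by_cases hyF : y ∈ F
        exacts [.inr ⟨map_eq hg hyF, (map_eq hh hyF).le⟩, .inl (hlt y ⟨hy, hyF⟩)]
    rw [← add_sub_cancel_left (c • g) h]
    exact Submodule.sub_mem _ (Submodule.subset_span hc)
      (Submodule.smul_mem _ c (Submodule.subset_span g_mem))

end LocallyConvex

section Normed

variable {X : Type*} [NormedAddCommGroup X] [NormedSpace ℝ X] {x : X}

lemma apply_eq_norm_of_mem_normalCone_closedBall (hx : ‖x‖ = 1) {φ : StrongDual ℝ X}
    (hφ : φ ∈ normalCone (closedBall 0 1) x) : φ x = ‖φ‖ := by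
  have le_apply {y : X} (hy : ‖y‖ ≤ 1) : φ y ≤ φ x := hφ (mem_closedBall_zero_iff.2 hy)
  apply le_antisymm
  · simpa [hx] using (le_abs_self _).trans (φ.le_opNorm x)
  · refine φ.opNorm_le_of_unit_norm (by simpa using le_apply (y := 0) (by simp)) fun y hy ↦ ?_
    refine abs_le'.2 ⟨le_apply hy.le, ?_⟩
    simpa using le_apply (y := -y) (by simp [hy])

lemma span_suppFunctionals_eq_span_normalCone (hx : ‖x‖ = 1) :
    Submodule.span ℝ (suppFunctionals x) =
      Submodule.span ℝ (normalCone (closedBall (0 : X) 1) x) := by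
  apply le_antisymm
  · refine Submodule.span_mono fun f hf y hy ↦ ?_
    have := (le_abs_self _).trans (f.le_opNorm y)
    rw [hf.1, one_mul] at this
    exact hf.2.symm ▸ this.trans (mem_closedBall_zero_iff.1 hy)
  · refine Submodule.span_le.2 fun φ hφ ↦ ?_
    rcases eq_or_ne φ 0 with rfl | hφ0
    · exact Submodule.zero_mem _
    have norm_ne : ‖φ‖ ≠ 0 := norm_ne_zero_iff.2 hφ0
    have normalized_mem : ‖φ‖⁻¹ • φ ∈ suppFunctionals x :=
      ⟨norm_smul_inv_norm (𝕜 := ℝ) hφ0, by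
        simp [apply_eq_norm_of_mem_normalCone_closedBall hx hφ, norm_ne]⟩
    rw [← smul_inv_smul₀ norm_ne φ]
    exact Submodule.smul_mem _ _ (Submodule.subset_span normalized_mem)

end Normed

end NormalCone

theorem stmt_0 {X : Type*} [NormedAddCommGroup X] [NormedSpace ℝ X]
    [FiniteDimensional ℝ X] {n i : ℕ}
    (hn : finrank ℝ X = n)
    (hpoly : (extremePoints ℝ (closedBall (0 : X) 1)).Finite)
    (F : Set X) (hFne : F.Nonempty) (hFconv : Convex ℝ F)
    (hFsub : F ⊆ sphere (0 : X) 1)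
    (hface : ∀ x ∈ closedBall (0 : X) 1, ∀ y ∈ closedBall (0 : X) 1,
      ∀ t : ℝ, t ∈ Ioo (0 : ℝ) 1 → (1 - t) • x + t • y ∈ F → x ∈ F ∧ y ∈ F)
    (hi : finrank ℝ (vectorSpan ℝ F) = i)
    (x : X) (hx : x ∈ intrinsicInterior ℝ F) :
    finrank ℝ (Submodule.span ℝ (suppFunctionals x)) = n - i := by
  have hball : convexHull ℝ (extremePoints ℝ (closedBall (0 : X) 1)) = closedBall 0 1 :=
    convexHull_extremePoints_eq_of_finite (isCompact_closedBall 0 1) (convex_closedBall 0 1) hpoly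
  have hF : IsExtreme ℝ (closedBall (0 : X) 1) F := by
    refine ⟨hFsub.trans sphere_subset_closedBall, fun a ha b hb z hz hzab ↦ ?_⟩
    rw [openSegment_eq_image] at hzab
    obtain ⟨t, ht, rfl⟩ := hzab
    exact (hface a ha b hb t ht hz).1
  have hx1 : ‖x‖ = 1 := mem_sphere_zero_iff_norm.1 (hFsub (intrinsicInterior_subset hx))
  have hspan : Submodule.span ℝ (suppFunctionals x) =
      StrongDual.polarSubmodule ℝ (vectorSpan ℝ F) := by
    rw [span_suppFunctionals_eq_span_normalCone hx1, ← hball]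
    exact span_normalCone_convexHull_eq_polarSubmodule hpoly (hball.symm ▸ hF) hx
  rw [hspan, ← hn, ← hi, ← finrank_add_finrank_polarSubmodule (vectorSpan ℝ F),
    Nat.add_sub_cancel_left]
end

section
/- Let X = ℓ∞ⁿ and let Y be a two-dimensional real normed linear space. Let T : X → Y be a bounded linear operator with ‖T‖ = 1, rank(T) = 2, and Ext(B_X) ⊆ M_T. Then the image T(B_X) of the closed unit ball has exactly 4 extreme points. -/
/-!
Call `T eᵢ` the columns of `T`. If `∑ i, cᵢ • T eᵢ = 0`, choose a vertex `ε` of the cube with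
`εᵢ` the sign of `cᵢ`, and a functional `f` of norm one attaining `‖T ε‖ = ‖T‖`. Since `f ∘ T` is
maximal on the cube at `ε`, all terms `cᵢ * f (T eᵢ)` are nonnegative; they sum to zero, so `f`
kills every column in the support of `c`. As `f (T ε) ≠ 0`, these columns do not span the range.
In rank two, take two independent columns: no other column can involve both of them, so each column
is a multiple of one of the two. The image of the cube is therefore a nondegenerate parallelogram.
-/

open Metric Set Module

section ExtremePoints

lemma extremePoints_image_of_injective {𝕜 E F : Type*} [Semiring 𝕜] [PartialOrder 𝕜]
    [AddCommMonoid E] [AddCommMonoid F] [Module 𝕜 E] [Module 𝕜 F]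
    {f : E →ₗ[𝕜] F} (hf : Function.Injective f) (s : Set E) :
    extremePoints 𝕜 (f '' s) = f '' extremePoints 𝕜 s := by
  have mem_iff (x : E) : f x ∈ extremePoints 𝕜 (f '' s) ↔ x ∈ extremePoints 𝕜 s := by
    have mem_openSegment (x₁ x₂ : E) :
        f x ∈ openSegment 𝕜 (f x₁) (f x₂) ↔ x ∈ openSegment 𝕜 x₁ x₂ := by
      simp only [openSegment, mem_ofPred_eq, ← map_smul, ← map_add, hf.eq_iff]
    simp only [mem_extremePoints_iff_left, forall_mem_image, hf.mem_set_image, hf.eq_iff,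
      mem_openSegment]
  ext y
  constructor
  · intro hy
    obtain ⟨x, -, rfl⟩ := extremePoints_subset hy
    exact mem_image_of_mem f ((mem_iff x).1 hy)
  · rintro ⟨x, hx, rfl⟩
    exact (mem_iff x).2 hx

variable {κ : Type*}

lemma extremePoints_Icc_pi {a b : κ → ℝ} (hab : a ≤ b) :
    extremePoints ℝ (Icc a b) = univ.pi fun j => {a j, b j} := by
  rw [← pi_univ_Icc, extremePoints_pi]
  exact pi_congr rfl fun j _ => extremePoints_Icc (hab j)

lemma encard_extremePoints_Icc_pi [Fintype κ] {a b : κ → ℝ} (hab : ∀ j, a j < b j) :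
    (extremePoints ℝ (Icc a b)).encard = 2 ^ Fintype.card κ := by
  rw [extremePoints_Icc_pi fun j => (hab j).le, encard_pi_eq_prod_encard]
  simp [encard_pair (hab _).ne]

end ExtremePoints

section UnitCube

variable {ι : Type*} [Fintype ι]

lemma pi_closedBall_zero_one_eq_Icc : closedBall (0 : ι → ℝ) 1 = Icc (-1) 1 := by
  ext x
  simp [pi_norm_le_iff_of_nonneg, abs_le, Pi.le_def, forall_and]

lemma exists_mem_extremePoints_eq_abs_mul (c : ι → ℝ) :
    ∃ ε ∈ extremePoints ℝ (closedBall (0 : ι → ℝ) 1), ∀ i, c i = |c i| * ε i := by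
  refine ⟨fun i => if 0 ≤ c i then 1 else -1, ?_, fun i => ?_⟩
  · rw [pi_closedBall_zero_one_eq_Icc, extremePoints_Icc_pi (neg_le_self zero_le_one)]
    intro i _
    dsimp only
    split_ifs <;> simp
  · dsimp only
    split_ifs with h
    · rw [mul_one, abs_of_nonneg h]
    · rw [mul_neg_one, abs_of_neg (not_le.1 h), neg_neg]

end UnitCube

section Columns

variable {K ι V : Type*} [DecidableEq ι]

lemma apply_eq_sum_smul_apply_single [Fintype ι] [Semiring K] [AddCommMonoid V] [Module K V]
    (T : (ι → K) →ₗ[K] V) (x : ι → K) : T x = ∑ i, x i • T (Pi.single i 1) := by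
  conv_lhs => rw [pi_eq_sum_univ' x]
  simp only [map_sum, map_smul]

lemma range_eq_span_range_apply_single [Finite ι] [Semiring K] [AddCommMonoid V] [Module K V]
    (T : (ι → K) →ₗ[K] V) :
    LinearMap.range T = Submodule.span K (range fun i => T (Pi.single i 1)) := by
  rw [LinearMap.range_eq_map, ← (Pi.basisFun K ι).span_eq, Submodule.map_span, ← range_comp]
  simp only [Function.comp_def, Pi.basisFun_apply]

lemma exists_linearIndependent_range_le_span_apply_single [Finite ι] [Field K] [AddCommGroup V]
    [Module K V] {r : ℕ} (T : (ι → K) →ₗ[K] V) (hr : finrank K (LinearMap.range T) = r) :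
    ∃ p : Fin r → ι, LinearIndependent K (fun j => T (Pi.single (p j) 1)) ∧
      LinearMap.range T ≤ Submodule.span K (range fun j => T (Pi.single (p j) 1)) := by
  subst hr
  rw [range_eq_span_range_apply_single]
  have := FiniteDimensional.span_of_finite K (finite_range fun i => T (Pi.single i 1))
  obtain ⟨w, hw_mem, hw_span, hw⟩ :=
    Submodule.exists_fun_fin_finrank_span_eq K (range fun i => T (Pi.single i 1))
  choose p hp using hw_mem
  obtain rfl : (fun j => T (Pi.single (p j) 1)) = w := funext hp
  exact ⟨p, hw, hw_span.ge⟩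

end Columns

section FiberSum

variable {ι κ : Type*} [Fintype ι] [DecidableEq κ]

/-- The sums of a function over the fibers of `σ`. When every column of a matrix is a multiple
`c i • w (σ i)` of some `w j`, the vector `x` is sent to the combination of the `w j` with
coefficients `fiberSum σ (x * c)`. -/
def fiberSum {M : Type*} [AddCommMonoid M] (σ : ι → κ) (u : ι → M) (j : κ) : M :=
  ∑ i with σ i = j, u i

lemma abs_fiberSum_mul_le {x : ι → ℝ} (hx : ‖x‖ ≤ 1) (σ : ι → κ) (c : ι → ℝ) (j : κ) :
    |fiberSum σ (x * c) j| ≤ fiberSum σ |c| j := by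
  refine (Finset.abs_sum_le_sum_abs _ _).trans (Finset.sum_le_sum fun i _ => ?_)
  rw [Pi.mul_apply, abs_mul]
  exact mul_le_of_le_one_left (abs_nonneg _) ((norm_le_pi_norm x i).trans hx)

lemma exists_fiberSum_mul_eq {σ : ι → κ} {c : ι → ℝ} {y : κ → ℝ}
    (hy : ∀ j, |y j| ≤ fiberSum σ |c| j) :
    ∃ x : ι → ℝ, ‖x‖ ≤ 1 ∧ fiberSum σ (x * c) = y := by
  set ρ := fiberSum σ |c|
  refine ⟨fun i => y (σ i) / ρ (σ i) * SignType.sign (c i), ?_, funext fun j => ?_⟩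
  · refine (pi_norm_le_iff_of_nonneg zero_le_one).2 fun i => ?_
    have abs_sign_le_one : |(SignType.sign (c i) : ℝ)| ≤ 1 := by
      rcases lt_trichotomy (c i) 0 with h | h | h <;> simp [h]
    have abs_div_le_one : |y (σ i) / ρ (σ i)| ≤ 1 := by
      rw [abs_div]
      exact div_le_one_of_le₀ ((hy _).trans (le_abs_self _)) (abs_nonneg _)
    rw [Real.norm_eq_abs, abs_mul]
    exact mul_le_one₀ abs_div_le_one (abs_nonneg _) abs_sign_le_one
  · calc ∑ i with σ i = j, y (σ i) / ρ (σ i) * SignType.sign (c i) * c i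
        = ∑ i with σ i = j, y j / ρ j * |c i| := by
          refine Finset.sum_congr rfl fun i hi => ?_
          rw [mul_assoc, sign_mul_self, (Finset.mem_filter.1 hi).2]
      _ = y j / ρ j * ρ j := (Finset.mul_sum _ _ _).symm
      _ = y j := div_mul_cancel_of_imp fun h => abs_nonpos_iff.1 (h ▸ hy j)

lemma image_fiberSum_mul_closedBall (σ : ι → κ) (c : ι → ℝ) :
    (fun x => fiberSum σ (x * c)) '' closedBall 0 1 = Icc (-fiberSum σ |c|) (fiberSum σ |c|) := by
  ext y
  have mem_Icc_iff : y ∈ Icc (-fiberSum σ |c|) (fiberSum σ |c|) ↔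
      ∀ j, |y j| ≤ fiberSum σ |c| j := by
    simp only [mem_Icc, Pi.le_def, Pi.neg_apply, abs_le, forall_and]
  simp only [mem_image, mem_closedBall_zero_iff, mem_Icc_iff]
  constructor
  · rintro ⟨x, hx, rfl⟩
    exact abs_fiberSum_mul_le hx σ c
  · exact exists_fiberSum_mul_eq

end FiberSum

section Parallelotope

variable {ι κ V : Type*} [Fintype ι] [DecidableEq ι] [Fintype κ] [AddCommGroup V] [Module ℝ V]

lemma apply_eq_linearCombination_fiberSum [DecidableEq κ] {T : (ι → ℝ) →ₗ[ℝ] V} {w : κ → V}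
    {σ : ι → κ} {c : ι → ℝ} (hT : ∀ i, T (Pi.single i 1) = c i • w (σ i)) (x : ι → ℝ) :
    T x = Fintype.linearCombination ℝ w (fiberSum σ (x * c)) :=
  calc T x = ∑ i, (x i * c i) • w (σ i) := by
        simp only [apply_eq_sum_smul_apply_single T x, hT, mul_smul]
    _ = ∑ j, ∑ i with σ i = j, (x i * c i) • w (σ i) := (Finset.sum_fiberwise _ _ _).symm
    _ = ∑ j, (∑ i with σ i = j, x i * c i) • w j := by
        refine Finset.sum_congr rfl fun j _ => ?_
        rw [Finset.sum_smul]
        exact Finset.sum_congr rfl fun i hi => by rw [(Finset.mem_filter.1 hi).2]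

theorem encard_extremePoints_image_closedBall_of_linearIndependent
    {T : (ι → ℝ) →ₗ[ℝ] V} {p : κ → ι}
    (hp : LinearIndependent ℝ fun j => T (Pi.single (p j) 1))
    (hT : ∀ i, ∃ j, ∃ c : ℝ, T (Pi.single i 1) = c • T (Pi.single (p j) 1)) :
    (extremePoints ℝ (T '' closedBall 0 1)).encard = 2 ^ Fintype.card κ := by
  classical
  choose σ c hσ using hT
  have σ_p (j : κ) : σ (p j) = j := by
    refine (hp.eq_of_smul_apply_eq_smul_apply 1 (c (p j)) j (σ (p j)) one_ne_zero ?_).symm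
    rw [one_smul, ← hσ]
  have c_p_ne_zero (j : κ) : c (p j) ≠ 0 := by
    intro h
    apply hp.ne_zero j
    rw [hσ (p j), h, zero_smul]
  have fiberSum_pos (j : κ) : 0 < fiberSum σ |c| j :=
    Finset.sum_pos' (fun i _ => abs_nonneg _) ⟨p j, by simp [σ_p], abs_pos.2 (c_p_ne_zero j)⟩
  have combination_injective := hp.fintypeLinearCombination_injective
  have image_eq : T '' closedBall 0 1 =
      Fintype.linearCombination ℝ (fun j => T (Pi.single (p j) 1)) ''
        Icc (-fiberSum σ |c|) (fiberSum σ |c|) := by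
    rw [← image_fiberSum_mul_closedBall, image_image]
    exact image_congr fun x _ =>
      apply_eq_linearCombination_fiberSum (w := fun j => T (Pi.single (p j) 1)) hσ x
  rw [image_eq, extremePoints_image_of_injective combination_injective,
    combination_injective.encard_image,
    encard_extremePoints_Icc_pi (a := -fiberSum σ |c|) fun j => neg_lt_self (fiberSum_pos j)]

end Parallelotope

section NormAttaining

variable {ι Y : Type*} [Fintype ι] [DecidableEq ι] [NormedAddCommGroup Y] [NormedSpace ℝ Y]
  {T : (ι → ℝ) →L[ℝ] Y}

lemma exists_dual_nonneg_mul_apply_single {ε : ι → ℝ} (hε : ‖ε‖ ≤ 1) (hTε : ‖T ε‖ = ‖T‖) :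
    ∃ f : StrongDual ℝ Y, f (T ε) = ‖T‖ ∧ ∀ i, 0 ≤ ε i * f (T (Pi.single i 1)) := by
  obtain ⟨f, hf_norm, hfTε⟩ := exists_dual_vector'' ℝ (T ε)
  replace hfTε : f (T ε) = ‖T‖ := hfTε.trans hTε
  refine ⟨f, hfTε, fun i => ?_⟩
  -- Zeroing the `i`-th coordinate of `ε` stays in the cube, where `f ∘ T` is at most `‖T‖`.
  have norm_sub_le : ‖ε - ε i • Pi.single i (1 : ℝ)‖ ≤ 1 := by
    rw [pi_norm_le_iff_of_nonneg zero_le_one] at hε ⊢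
    intro j
    rcases eq_or_ne j i with rfl | hj
    · simp
    · simpa [hj] using hε j
  have apply_sub_le : f (T (ε - ε i • Pi.single i (1 : ℝ))) ≤ ‖T‖ :=
    calc f (T (ε - ε i • Pi.single i (1 : ℝ))) ≤ ‖f (T (ε - ε i • Pi.single i (1 : ℝ)))‖ :=
          Real.le_norm_self _
      _ ≤ 1 * ‖T (ε - ε i • Pi.single i (1 : ℝ))‖ := f.le_of_opNorm_le hf_norm _
      _ ≤ ‖T‖ := by simpa using T.le_opNorm_of_le norm_sub_le
  simpa [hfTε] using apply_sub_le

lemma not_range_le_span_image_support (hT : T ≠ 0)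
    (hM : ∀ x ∈ extremePoints ℝ (closedBall (0 : ι → ℝ) 1), ‖T x‖ = ‖T‖)
    {c : ι → ℝ} (hc : T c = 0) :
    ¬ LinearMap.range (T : (ι → ℝ) →ₗ[ℝ] Y) ≤
      Submodule.span ℝ ((fun i => T (Pi.single i 1)) '' Function.support c) := by
  intro range_le
  obtain ⟨ε, hε, c_eq⟩ := exists_mem_extremePoints_eq_abs_mul c
  obtain ⟨f, hfTε, hf⟩ := exists_dual_nonneg_mul_apply_single
    (mem_closedBall_zero_iff.1 (extremePoints_subset hε)) (hM ε hε)
  have term_nonneg (i : ι) : 0 ≤ c i * f (T (Pi.single i 1)) := by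
    rw [c_eq i, mul_assoc]
    exact mul_nonneg (abs_nonneg _) (hf i)
  have sum_eq_zero : ∑ i, c i * f (T (Pi.single i 1)) = 0 := by
    have apply_c := apply_eq_sum_smul_apply_single (f.toLinearMap ∘ₗ T.toLinearMap) c
    simpa [hc] using apply_c.symm
  have term_eq_zero (i : ι) : c i * f (T (Pi.single i 1)) = 0 :=
    (Finset.sum_eq_zero_iff_of_nonneg fun i _ => term_nonneg i).1 sum_eq_zero i (Finset.mem_univ i)
  have span_le_ker : Submodule.span ℝ ((fun i => T (Pi.single i 1)) '' Function.support c) ≤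
      LinearMap.ker (f : Y →ₗ[ℝ] ℝ) := by
    rw [Submodule.span_le]
    rintro _ ⟨i, hi, rfl⟩
    exact (mul_eq_zero.1 (term_eq_zero i)).resolve_left hi
  have fTε_eq_zero : f (T ε) = 0 := span_le_ker (range_le ⟨ε, rfl⟩)
  exact hT (norm_eq_zero.1 (hfTε.symm.trans fTε_eq_zero))

lemma exists_coeff_eq_zero_of_notMem_range {κ : Type*} [Fintype κ] (hT : T ≠ 0)
    (hM : ∀ x ∈ extremePoints ℝ (closedBall (0 : ι → ℝ) 1), ‖T x‖ = ‖T‖)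
    {p : κ → ι} (hp : Function.Injective p)
    (hspan : LinearMap.range (T : (ι → ℝ) →ₗ[ℝ] Y) ≤
      Submodule.span ℝ (range fun j => T (Pi.single (p j) 1)))
    {i : ι} (hi : i ∉ range p) {a : κ → ℝ}
    (ha : T (Pi.single i 1) = ∑ j, a j • T (Pi.single (p j) 1)) : ∃ j, a j = 0 := by
  classical
  by_contra! a_ne_zero
  set c : ι → ℝ := Pi.single i 1 - ∑ j, a j • Pi.single (p j) 1 with hc
  have c_p (k : κ) : c (p k) = -a k := by
    have p_k_ne : p k ≠ i := fun h => hi ⟨k, h⟩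
    simp [hc, Pi.single_apply, hp.eq_iff, p_k_ne]
  refine not_range_le_span_image_support hT hM (c := c) (by simp [hc, ha])
    (hspan.trans (Submodule.span_mono ?_))
  rintro _ ⟨j, rfl⟩
  exact ⟨p j, by simpa [c_p] using a_ne_zero j, rfl⟩

lemma exists_apply_single_eq_smul_apply_single (hT : T ≠ 0)
    (hM : ∀ x ∈ extremePoints ℝ (closedBall (0 : ι → ℝ) 1), ‖T x‖ = ‖T‖)
    {p : Fin 2 → ι} (hp : Function.Injective p)
    (hspan : LinearMap.range (T : (ι → ℝ) →ₗ[ℝ] Y) ≤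
      Submodule.span ℝ (range fun j => T (Pi.single (p j) 1))) (i : ι) :
    ∃ j, ∃ c : ℝ, T (Pi.single i 1) = c • T (Pi.single (p j) 1) := by
  by_cases hi : i ∈ range p
  · obtain ⟨j, rfl⟩ := hi
    exact ⟨j, 1, (one_smul ℝ _).symm⟩
  obtain ⟨a, ha⟩ := (Submodule.mem_span_range_iff_exists_fun ℝ).1 (hspan ⟨Pi.single i 1, rfl⟩)
  obtain ⟨j, hj⟩ := exists_coeff_eq_zero_of_notMem_range hT hM hp hspan hi ha.symm
  refine ⟨j.rev, a j.rev, ha.symm.trans ?_⟩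
  -- `j.rev` is the index other than `j`.
  fin_cases j <;> simp_all

end NormAttaining

theorem stmt_1_general {ι Y : Type*} [Fintype ι] [NormedAddCommGroup Y] [NormedSpace ℝ Y]
    (T : (ι → ℝ) →L[ℝ] Y)
    (hrank : finrank ℝ (LinearMap.range (T : (ι → ℝ) →ₗ[ℝ] Y)) = 2)
    (hM : ∀ x ∈ extremePoints ℝ (closedBall (0 : ι → ℝ) 1), ‖T x‖ = ‖T‖) :
    (extremePoints ℝ (T '' closedBall (0 : ι → ℝ) 1)).encard = 4 := by
  classical
  have hT : T ≠ 0 := by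
    rintro rfl
    rw [ContinuousLinearMap.toLinearMap_zero, LinearMap.range_zero, finrank_bot] at hrank
    exact two_ne_zero hrank.symm
  obtain ⟨p, hp, hspan⟩ :=
    exists_linearIndependent_range_le_span_apply_single (T : (ι → ℝ) →ₗ[ℝ] Y) hrank
  have hp_inj : Function.Injective p := fun _ _ h => hp.injective (by simp only [h])
  have column_eq_smul := exists_apply_single_eq_smul_apply_single hT hM hp_inj hspan
  calc (extremePoints ℝ (T '' closedBall (0 : ι → ℝ) 1)).encard = 2 ^ Fintype.card (Fin 2) :=
        encard_extremePoints_image_closedBall_of_linearIndependent hp column_eq_smul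
    _ = 4 := by norm_num

theorem stmt_1 {n : ℕ} {Y : Type*} [NormedAddCommGroup Y] [NormedSpace ℝ Y]
    [FiniteDimensional ℝ Y] (hY : finrank ℝ Y = 2)
    (T : (Fin n → ℝ) →L[ℝ] Y) (hT : ‖T‖ = 1)
    (hrank : finrank ℝ (LinearMap.range (T : (Fin n → ℝ) →ₗ[ℝ] Y)) = 2)
    (hMT : extremePoints ℝ (closedBall (0 : Fin n → ℝ) 1) ⊆
      {x ∈ sphere (0 : Fin n → ℝ) 1 | ‖T x‖ = ‖T‖}) :
    (extremePoints ℝ (T '' closedBall (0 : Fin n → ℝ) 1)).encard = 4 :=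
  stmt_1_general T hrank fun _ hx => (hMT hx).2
end

section
/- Let X = ℓ∞ⁿ and let Y be a two-dimensional real normed linear space. Let T : X → Y be a bounded linear operator with ‖T‖ = 1, rank(T) = 2, and Ext(B_X) ⊆ M_T. Suppose T(B_X) is the convex hull of {z₁, −z₁, z₂, −z₂} for some z₁, z₂ ∈ Y. Then either for every x ∈ Ext(B_X) the point Tx lies in L[z₁,z₂] ∪ L[−z₁,−z₂], or for every x ∈ Ext(B_X) the point Tx lies in L[z₁,−z₂] ∪ L[−z₁,z₂]. -/
open Metric Set Module

/-!
Write `z₁ = m + d` and `z₂ = m - d`, so that `T(B_X)` is the parallelogram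
`{s m + t d : |s|, |t| ≤ 1}` and the claim is that `|s| = 1` at the images of all vertices of the
cube, or `|t| = 1` at all of them. Linear dependence of `m` and `d` makes the parallelogram collapse
onto one pair of its opposite sides. Otherwise `s` and `t` are linear functionals `f` and `g` on the
cube. Both are maximal at a preimage of `z₁`, while at a preimage of `z₂` the functional `f` is
maximal and `g` minimal; comparing signs of coefficients, no coordinate of `x` can matter to both.
Hence, given vertices `x`, `y` with `|f x| < 1` and `|g y| < 1`, mixing their coordinates yields a
vertex `u` with `f u = f x` and `g u = g y`. Then `T u` is interior to the parallelogram, so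
`‖T u‖ < ‖T‖`, contrary to `u ∈ M_T`.
-/

section LinearIndependence

variable {K V : Type*} [Field K] [AddCommGroup V] [Module K V]

lemma exists_dual_apply_eq_of_linearIndependent {κ : Type*} {v : κ → V}
    (hv : LinearIndependent K v) (c : κ → K) : ∃ f : Dual K V, ∀ k, f (v k) = c k := by
  obtain ⟨g, hg⟩ := LinearMap.exists_leftInverse_of_injective (Finsupp.linearCombination K v)
    (LinearMap.ker_eq_bot.2 hv)
  refine ⟨Finsupp.linearCombination K c ∘ₗ g, fun k => ?_⟩
  have hgk : g (v k) = Finsupp.single k 1 := by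
    simpa using LinearMap.congr_fun hg (Finsupp.single k 1)
  simp [hgk]

lemma exists_eq_smul_or_eq_smul_of_not_linearIndependent [LinearOrder K] [IsStrictOrderedRing K]
    {x y : V} (h : ¬LinearIndependent K ![x, y]) :
    ∃ c : K, |c| ≤ 1 ∧ (x = c • y ∨ y = c • x) := by
  rcases eq_or_ne x 0 with rfl | hx
  · exact ⟨0, by simp⟩
  obtain ⟨a, rfl⟩ : ∃ a : K, a • x = y := by
    simpa only [LinearIndependent.pair_iff' hx, not_forall, not_not] using h
  rcases le_total |a| 1 with ha | ha
  · exact ⟨a, ha, .inr rfl⟩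
  · have ha0 : a ≠ 0 := abs_pos.1 (zero_lt_one.trans_le ha)
    exact ⟨a⁻¹, (abs_inv a).trans_le (inv_le_one_of_one_le₀ ha), .inl (inv_smul_smul₀ ha0 x).symm⟩

end LinearIndependence

section Parallelogram

variable {E : Type*} [AddCommGroup E] [Module ℝ E] {m d y : E}

/-- The centrally symmetric parallelogram with vertices `±(m + d)` and `±(m - d)`, possibly
degenerate. Taking as parameters the midpoints `m` and `d` of two adjacent sides, rather than two
vertices, makes it the image of the square `[-1, 1]²`. -/
def parallelogram (m d : E) : Set E :=
  {y | ∃ s t : ℝ, |s| ≤ 1 ∧ |t| ≤ 1 ∧ s • m + t • d = y}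

/-- The union of the two opposite sides of `parallelogram m d` that are parallel to `d`; the other
two sides form `oppositeSides d m`. -/
def oppositeSides (m d : E) : Set E :=
  {y | ∃ s t : ℝ, |s| = 1 ∧ |t| ≤ 1 ∧ s • m + t • d = y}

lemma parallelogram_comm (m d : E) : parallelogram m d = parallelogram d m := by
  ext y
  constructor <;> rintro ⟨s, t, hs, ht, rfl⟩ <;> exact ⟨t, s, ht, hs, add_comm _ _⟩

lemma convex_parallelogram (m d : E) : Convex ℝ (parallelogram m d) := by
  have abs_combo_le {a b s t : ℝ} (ha : 0 ≤ a) (hb : 0 ≤ b) (hab : a + b = 1)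
      (hs : |s| ≤ 1) (ht : |t| ≤ 1) : |a * s + b * t| ≤ 1 :=
    abs_le.2 (convex_Icc (-1 : ℝ) 1 (abs_le.1 hs) (abs_le.1 ht) ha hb hab)
  rintro _ ⟨s, t, hs, ht, rfl⟩ _ ⟨s', t', hs', ht', rfl⟩ a b ha hb hab
  exact ⟨a * s + b * s', a * t + b * t', abs_combo_le ha hb hab hs hs',
    abs_combo_le ha hb hab ht ht', by module⟩

lemma convexHull_subset_parallelogram (m d : E) :
    convexHull ℝ {m + d, -(m + d), m - d, -(m - d)} ⊆ parallelogram m d := by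
  refine convexHull_min ?_ (convex_parallelogram m d)
  rintro _ (rfl | rfl | rfl | rfl)
  · exact ⟨1, 1, by simp, by simp, by module⟩
  · exact ⟨-1, -1, by simp, by simp, by module⟩
  · exact ⟨1, -1, by simp, by simp, by module⟩
  · exact ⟨-1, 1, by simp, by simp, by module⟩

lemma add_smul_mem_segment (m d : E) {t : ℝ} (ht : |t| ≤ 1) :
    m + t • d ∈ segment ℝ (m + d) (m - d) := by
  obtain ⟨h₁, h₂⟩ := abs_le.1 ht
  exact ⟨(1 + t) / 2, (1 - t) / 2, by linarith, by linarith, by ring, by module⟩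

lemma oppositeSides_subset_union_segment (m d : E) :
    oppositeSides m d ⊆ segment ℝ (m + d) (m - d) ∪ segment ℝ (-(m + d)) (-(m - d)) := by
  rintro _ ⟨s, t, hs, ht, rfl⟩
  rcases eq_or_eq_neg_of_abs_eq hs with rfl | rfl
  · left
    simpa only [one_smul] using add_smul_mem_segment m d ht
  · right
    rw [neg_one_smul, neg_add, neg_sub']
    simpa only [neg_smul, smul_neg, neg_neg] using
      add_smul_mem_segment (-m) (-d) ((abs_neg t).trans_le ht)

lemma parallelogram_smul_subset_oppositeSides {c : ℝ} (hc : |c| ≤ 1) (d : E) :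
    parallelogram (c • d) d ⊆ oppositeSides (c • d) d := by
  rintro _ ⟨s, t, hs, ht, rfl⟩
  have hr : |s * c + t| ≤ |c| + 1 := calc
    |s * c + t| ≤ |s| * |c| + |t| := (abs_add_le _ _).trans_eq (by rw [abs_mul])
    _ ≤ |c| + 1 := add_le_add (mul_le_of_le_one_left (abs_nonneg c) hs) ht
  -- Subtract from the coefficient `s * c + t` of `d` whichever of `±c` has the same sign.
  obtain ⟨σ, hσ, ht'⟩ : ∃ σ : ℝ, |σ| = 1 ∧ |s * c + t - σ * c| ≤ 1 := by
    have hsub : |s * c + t - c| ≤ 1 ∨ |s * c + t + c| ≤ 1 := by grind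
    rcases hsub with h | h
    · exact ⟨1, by simp, by simpa using h⟩
    · exact ⟨-1, by simp, by simpa using h⟩
  exact ⟨σ, s * c + t - σ * c, hσ, ht', by module⟩

lemma parallelogram_subset_oppositeSides_or_of_not_linearIndependent
    (h : ¬LinearIndependent ℝ ![m, d]) :
    parallelogram m d ⊆ oppositeSides m d ∨ parallelogram m d ⊆ oppositeSides d m := by
  obtain ⟨c, hc, rfl | rfl⟩ := exists_eq_smul_or_eq_smul_of_not_linearIndependent h
  · exact .inl (parallelogram_smul_subset_oppositeSides hc d)
  · exact .inr (parallelogram_comm m _ ▸ parallelogram_smul_subset_oppositeSides hc m)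

section Coordinates

variable {φ ψ : Dual ℝ E} (hφm : φ m = 1) (hφd : φ d = 0) (hψm : ψ m = 0) (hψd : ψ d = 1)
include hφm hφd hψm hψd

lemma mem_parallelogram_iff_of_dual :
    y ∈ parallelogram m d ↔ |φ y| ≤ 1 ∧ |ψ y| ≤ 1 ∧ φ y • m + ψ y • d = y := by
  refine ⟨?_, fun h => ⟨φ y, ψ y, h⟩⟩
  rintro ⟨s, t, hs, ht, rfl⟩
  simp [*]

lemma mem_oppositeSides_iff_of_dual :
    y ∈ oppositeSides m d ↔ |φ y| = 1 ∧ |ψ y| ≤ 1 ∧ φ y • m + ψ y • d = y := by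
  refine ⟨?_, fun h => ⟨φ y, ψ y, h⟩⟩
  rintro ⟨s, t, hs, ht, rfl⟩
  simp [*]

end Coordinates

end Parallelogram

lemma mem_union_oppositeSides_of_le_norm {E : Type*} [SeminormedAddCommGroup E] [NormedSpace ℝ E]
    {m d y : E} {r : ℝ} (hr : 0 < r) (hadd : ‖m + d‖ ≤ r) (hsub : ‖m - d‖ ≤ r)
    (hy : y ∈ parallelogram m d) (hry : r ≤ ‖y‖) :
    y ∈ oppositeSides m d ∪ oppositeSides d m := by
  obtain ⟨s, t, hs, ht, rfl⟩ := hy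
  by_contra hside
  rw [mem_union, not_or] at hside
  have hs' : |s| < 1 := hs.lt_of_ne fun h => hside.1 ⟨s, t, h, ht, rfl⟩
  have ht' : |t| < 1 := ht.lt_of_ne fun h => hside.2 ⟨t, s, h, hs, add_comm _ _⟩
  have hweights : |(s + t) / 2| + |(s - t) / 2| < 1 := by grind
  have hlt : ‖s • m + t • d‖ < r := calc
    ‖s • m + t • d‖ = ‖((s + t) / 2) • (m + d) + ((s - t) / 2) • (m - d)‖ := by congr 1; module
    _ ≤ |(s + t) / 2| * ‖m + d‖ + |(s - t) / 2| * ‖m - d‖ := by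
      simpa only [norm_smul, Real.norm_eq_abs] using
        norm_add_le (((s + t) / 2) • (m + d)) (((s - t) / 2) • (m - d))
    _ ≤ |(s + t) / 2| * r + |(s - t) / 2| * r := by gcongr
    _ = (|(s + t) / 2| + |(s - t) / 2|) * r := by ring
    _ < r := mul_lt_of_lt_one_left hr hweights
  exact hlt.not_ge hry

section Coefficients

variable {R ι : Type*} [CommSemiring R] [Finite ι] [DecidableEq ι]

lemma dual_apply_eq_of_forall_apply_single_ne_zero {f : Dual R (ι → R)} {x y : ι → R}
    (h : ∀ i, f (Pi.single i 1) ≠ 0 → x i = y i) : f x = f y := by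
  cases nonempty_fintype ι
  have hsum (z : ι → R) : f z = ∑ i, z i * f (Pi.single i 1) := by
    conv_lhs => rw [pi_eq_sum_univ' z]
    simp
  rw [hsum x, hsum y]
  refine Finset.sum_congr rfl fun i _ => ?_
  by_cases hi : f (Pi.single i 1) = 0
  · simp [hi]
  · rw [h i hi]

lemma exists_mem_univ_pi_apply_eq_apply_eq {f g : Dual R (ι → R)}
    (hfg : ∀ i, f (Pi.single i 1) = 0 ∨ g (Pi.single i 1) = 0) {A : ι → Set R} {x y : ι → R}
    (hx : x ∈ univ.pi A) (hy : y ∈ univ.pi A) :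
    ∃ u ∈ univ.pi A, f u = f x ∧ g u = g y := by
  classical
  refine ⟨{i | g (Pi.single i 1) = 0}.piecewise x y, piecewise_mem_pi _ hx hy,
    dual_apply_eq_of_forall_apply_single_ne_zero fun i hi => ?_,
    dual_apply_eq_of_forall_apply_single_ne_zero fun i hi => ?_⟩
  · exact piecewise_eq_of_mem _ _ _ ((hfg i).resolve_left hi)
  · exact piecewise_eq_of_notMem _ _ _ hi

end Coefficients

section Pi

variable {ι : Type*} [Fintype ι] {E : ι → Type*}

lemma extremePoints_closedBall_pi [∀ i, SeminormedAddCommGroup (E i)]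
    [∀ i, NormedSpace ℝ (E i)] (c : ∀ i, E i) {r : ℝ} (hr : 0 ≤ r) :
    extremePoints ℝ (closedBall c r) =
      univ.pi fun i => extremePoints ℝ (closedBall (c i) r) := by
  rw [closedBall_pi c hr, extremePoints_pi]

lemma update_mem_closedBall_pi [∀ i, PseudoMetricSpace (E i)] [DecidableEq ι]
    {c v : ∀ i, E i} {r : ℝ} (hv : v ∈ closedBall c r) {i : ι} {a : E i}
    (ha : a ∈ closedBall (c i) r) : Function.update v i a ∈ closedBall c r := by
  have hr : 0 ≤ r := dist_nonneg.trans (mem_closedBall.1 hv)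
  rw [closedBall_pi c hr] at hv ⊢
  exact (update_mem_pi_iff_of_mem hv).2 fun _ => ha

end Pi

section Cube

variable {ι : Type*} [Fintype ι] {f g : Dual ℝ (ι → ℝ)} {v w : ι → ℝ}

lemma mul_apply_single_eq_abs_of_isMaxOn [DecidableEq ι] (hv : v ∈ closedBall 0 1)
    (hmax : IsMaxOn f (closedBall 0 1) v) (i : ι) :
    v i * f (Pi.single i 1) = |f (Pi.single i 1)| := by
  set a := f (Pi.single i 1)
  apply le_antisymm
  · have hvi : |v i| ≤ 1 := (norm_le_pi_norm v i).trans (mem_closedBall_zero_iff.1 hv)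
    calc v i * a ≤ |v i| * |a| := (le_abs_self _).trans_eq (abs_mul _ _)
      _ ≤ |a| := mul_le_of_le_one_left (abs_nonneg a) hvi
  · have hsign : |(SignType.sign a : ℝ)| ≤ 1 := by cases SignType.sign a <;> simp
    have hle : f (Function.update v i (SignType.sign a)) ≤ f v :=
      hmax (update_mem_closedBall_pi hv (mem_closedBall_zero_iff.2 hsign))
    have hupdate : Function.update v i (SignType.sign a : ℝ) =
        v + (SignType.sign a - v i) • Pi.single i 1 := by
      ext j
      rcases eq_or_ne j i with rfl | hj <;> simp [*]
    rw [hupdate, map_add, map_smul, smul_eq_mul, sub_mul, sign_mul_self] at hle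
    linarith

lemma apply_single_eq_zero_or_of_isMaxOn_of_isMinOn [DecidableEq ι]
    (hv : v ∈ closedBall 0 1) (hw : w ∈ closedBall 0 1)
    (hfv : IsMaxOn f (closedBall 0 1) v) (hfw : IsMaxOn f (closedBall 0 1) w)
    (hgv : IsMaxOn g (closedBall 0 1) v) (hgw : IsMinOn g (closedBall 0 1) w) (i : ι) :
    f (Pi.single i 1) = 0 ∨ g (Pi.single i 1) = 0 := by
  refine or_iff_not_imp_left.2 fun hfi => abs_eq_zero.1 ?_
  have hvw : v i = w i := mul_right_cancel₀ hfi <|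
    (mul_apply_single_eq_abs_of_isMaxOn hv hfv i).trans
      (mul_apply_single_eq_abs_of_isMaxOn hw hfw i).symm
  have hgvi := mul_apply_single_eq_abs_of_isMaxOn hv hgv i
  have hgwi := mul_apply_single_eq_abs_of_isMaxOn (f := -g) hw hgw.neg i
  rw [LinearMap.neg_apply, abs_neg, ← hvw] at hgwi
  linarith

lemma forall_extremePoints_abs_eq_one_or
    (hf : ∀ x ∈ closedBall 0 1, |f x| ≤ 1) (hg : ∀ x ∈ closedBall 0 1, |g x| ≤ 1)
    (hv : v ∈ closedBall 0 1) (hw : w ∈ closedBall 0 1)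
    (hfv : f v = 1) (hfw : f w = 1) (hgv : g v = 1) (hgw : g w = -1)
    (hext : ∀ x ∈ extremePoints ℝ (closedBall 0 1), |f x| = 1 ∨ |g x| = 1) :
    (∀ x ∈ extremePoints ℝ (closedBall 0 1), |f x| = 1) ∨
      ∀ x ∈ extremePoints ℝ (closedBall 0 1), |g x| = 1 := by
  classical
  have hcoeff : ∀ i, f (Pi.single i 1) = 0 ∨ g (Pi.single i 1) = 0 :=
    apply_single_eq_zero_or_of_isMaxOn_of_isMinOn hv hw
      (fun x hx => hfv ▸ (abs_le.1 (hf x hx)).2) (fun x hx => hfw ▸ (abs_le.1 (hf x hx)).2)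
      (fun x hx => hgv ▸ (abs_le.1 (hg x hx)).2) (fun x hx => hgw ▸ (abs_le.1 (hg x hx)).1)
  by_contra! h
  obtain ⟨⟨x, hx, hfx⟩, y, hy, hgy⟩ := h
  rw [extremePoints_closedBall_pi _ zero_le_one] at hx hy hext
  obtain ⟨u, hu, hfu, hgu⟩ := exists_mem_univ_pi_apply_eq_apply_eq hcoeff hx hy
  rcases hext u hu with hu | hu
  · exact hfx (hfu ▸ hu)
  · exact hgy (hgu ▸ hu)

lemma forall_extremePoints_mem_oppositeSides_or {E : Type*} [AddCommGroup E] [Module ℝ E]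
    {m d : E} (hmd : LinearIndependent ℝ ![m, d]) {T : (ι → ℝ) →ₗ[ℝ] E}
    (hT : MapsTo T (closedBall 0 1) (parallelogram m d))
    (hadd : m + d ∈ T '' closedBall 0 1) (hsub : m - d ∈ T '' closedBall 0 1)
    (hext : ∀ x ∈ extremePoints ℝ (closedBall 0 1), T x ∈ oppositeSides m d ∪ oppositeSides d m) :
    (∀ x ∈ extremePoints ℝ (closedBall 0 1), T x ∈ oppositeSides m d) ∨
      ∀ x ∈ extremePoints ℝ (closedBall 0 1), T x ∈ oppositeSides d m := by
  obtain ⟨φ, hφ⟩ := exists_dual_apply_eq_of_linearIndependent hmd ![1, 0]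
  obtain ⟨ψ, hψ⟩ := exists_dual_apply_eq_of_linearIndependent hmd ![0, 1]
  have hφm : φ m = 1 := hφ 0
  have hφd : φ d = 0 := hφ 1
  have hψm : ψ m = 0 := hψ 0
  have hψd : ψ d = 1 := hψ 1
  have hpar {x : ι → ℝ} (hx : x ∈ closedBall 0 1) :=
    (mem_parallelogram_iff_of_dual hφm hφd hψm hψd).1 (hT hx)
  have hside {y : E} := mem_oppositeSides_iff_of_dual (y := y) hφm hφd hψm hψd
  have hside' {y : E} := mem_oppositeSides_iff_of_dual (y := y) hψd hψm hφd hφm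
  obtain ⟨v, hv, hTv⟩ := hadd
  obtain ⟨w, hw, hTw⟩ := hsub
  have hdichotomy := forall_extremePoints_abs_eq_one_or (f := φ ∘ₗ T) (g := ψ ∘ₗ T)
    (fun x hx => (hpar hx).1) (fun x hx => (hpar hx).2.1) hv hw
    (by simp [*]) (by simp [*]) (by simp [*]) (by simp [*])
    fun x hx => (hext x hx).imp (hside.1 · |>.1) (hside'.1 · |>.1)
  refine hdichotomy.imp (fun h x hx => ?_) fun h x hx => ?_ <;>
    obtain ⟨hφx, hψx, hx_eq⟩ := hpar (extremePoints_subset hx)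
  · exact hside.2 ⟨h x hx, hψx, hx_eq⟩
  · exact hside'.2 ⟨h x hx, hφx, (add_comm _ _).trans hx_eq⟩

end Cube

theorem stmt_2_general {ι Y : Type*} [Fintype ι] [NormedAddCommGroup Y] [NormedSpace ℝ Y]
    (T : (ι → ℝ) →L[ℝ] Y)
    (hMT : extremePoints ℝ (closedBall (0 : ι → ℝ) 1) ⊆ {x | ‖T x‖ = ‖T‖})
    (z₁ z₂ : Y)
    (himg : T '' closedBall (0 : ι → ℝ) 1 = convexHull ℝ {z₁, -z₁, z₂, -z₂}) :
    (∀ x ∈ extremePoints ℝ (closedBall (0 : ι → ℝ) 1),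
      T x ∈ segment ℝ z₁ z₂ ∪ segment ℝ (-z₁) (-z₂)) ∨
    (∀ x ∈ extremePoints ℝ (closedBall (0 : ι → ℝ) 1),
      T x ∈ segment ℝ z₁ (-z₂) ∪ segment ℝ (-z₁) z₂) := by
  obtain ⟨m, d, rfl, rfl⟩ : ∃ m d, z₁ = m + d ∧ z₂ = m - d :=
    ⟨(2⁻¹ : ℝ) • (z₁ + z₂), (2⁻¹ : ℝ) • (z₁ - z₂), by module, by module⟩
  have hadd : m + d ∈ T '' closedBall 0 1 := himg ▸ subset_convexHull ℝ _ (by simp)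
  have hsub : m - d ∈ T '' closedBall 0 1 := himg ▸ subset_convexHull ℝ _ (by simp)
  have hpar : MapsTo T (closedBall 0 1) (parallelogram m d) :=
    mapsTo_iff_image_subset.2 (himg.trans_subset (convexHull_subset_parallelogram m d))
  have hnorm : ∀ y ∈ T '' closedBall 0 1, ‖y‖ ≤ ‖T‖ :=
    forall_mem_image.2 fun x hx => T.unit_le_opNorm x (mem_closedBall_zero_iff.1 hx)
  have hsides : (∀ x ∈ extremePoints ℝ (closedBall 0 1), T x ∈ oppositeSides m d) ∨
      ∀ x ∈ extremePoints ℝ (closedBall 0 1), T x ∈ oppositeSides d m := by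
    by_cases hmd : LinearIndependent ℝ ![m, d]
    · have hne : m + d ≠ 0 := fun h =>
        one_ne_zero (LinearIndependent.pair_iff.1 hmd 1 1 (by simpa)).1
      have hpos : 0 < ‖T‖ := (norm_pos_iff.2 hne).trans_le (hnorm _ hadd)
      exact forall_extremePoints_mem_oppositeSides_or (T := T.toLinearMap) hmd hpar hadd hsub
        fun x hx => mem_union_oppositeSides_of_le_norm hpos (hnorm _ hadd) (hnorm _ hsub)
          (hpar (extremePoints_subset hx)) (hMT hx).ge
    · exact (parallelogram_subset_oppositeSides_or_of_not_linearIndependent hmd).imp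
        (fun h x hx => h (hpar (extremePoints_subset hx)))
        (fun h x hx => h (hpar (extremePoints_subset hx)))
  refine hsides.imp (fun h x hx => oppositeSides_subset_union_segment m d (h x hx)) fun h x hx => ?_
  simpa only [add_comm d m, neg_sub] using oppositeSides_subset_union_segment d m (h x hx)

theorem stmt_2 {n : ℕ} {Y : Type*} [NormedAddCommGroup Y] [NormedSpace ℝ Y]
    [FiniteDimensional ℝ Y] (hY : finrank ℝ Y = 2)
    (T : (Fin n → ℝ) →L[ℝ] Y) (hT : ‖T‖ = 1)
    (hrank : finrank ℝ (LinearMap.range (T : (Fin n → ℝ) →ₗ[ℝ] Y)) = 2)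
    (hMT : extremePoints ℝ (closedBall (0 : Fin n → ℝ) 1) ⊆
      {x ∈ sphere (0 : Fin n → ℝ) 1 | ‖T x‖ = ‖T‖})
    (z₁ z₂ : Y)
    (himg : T '' closedBall (0 : Fin n → ℝ) 1 =
      convexHull ℝ {z₁, -z₁, z₂, -z₂}) :
    (∀ x ∈ extremePoints ℝ (closedBall (0 : Fin n → ℝ) 1),
      T x ∈ segment ℝ z₁ z₂ ∪ segment ℝ (-z₁) (-z₂)) ∨
    (∀ x ∈ extremePoints ℝ (closedBall (0 : Fin n → ℝ) 1),
      T x ∈ segment ℝ z₁ (-z₂) ∪ segment ℝ (-z₁) z₂) :=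
  stmt_2_general T (fun _ hx => (hMT hx).2) z₁ z₂ himg
end

section
/- Let F be a face of the closed unit ball of ℓ∞ⁿ (a nonempty convex subset F of the unit ball such that whenever x, y lie in the unit ball, t ∈ (0,1) and (1−t)x + t y ∈ F, then x, y ∈ F) that is contained in the unit sphere, and suppose F has exactly 2^k extreme points. Then F contains exactly k+1 linearly independent extreme points; that is, the dimension of the linear span of Ext(F) equals k + 1. -/
open Metric Set Module

/-!
A convex extreme subset `F` of a finite product of convex sets is the product of its coordinate
projections, since the midpoint of two points of `F` does not change when they swap a coordinate.
Each projection is in turn a face of its factor, so a face of a box is a product of intervals and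
of endpoints, and its `2 ^ d` extreme points affinely span a space of dimension `d`. If `F` lies in
the unit sphere, Hahn–Banach provides a functional that is constant and nonzero on `F`; the origin
is then outside the affine span of `F`, and the linear span has one dimension more.
-/

section Spans

lemma span_eq_vectorSpan_sup_span_singleton {K V : Type*} [Ring K] [AddCommGroup V] [Module K V]
    {s : Set V} {x : V} (hx : x ∈ s) :
    Submodule.span K s = vectorSpan K s ⊔ Submodule.span K {x} := by
  refine le_antisymm (Submodule.span_le.2 fun y hy ↦ ?_) (sup_le ?_ ?_)
  · rw [← sub_add_cancel y x]
    exact Submodule.add_mem_sup (vsub_mem_vectorSpan K hy hx) (Submodule.mem_span_singleton_self x)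
  · rw [vectorSpan_eq_span_vsub_set_right K hx, Submodule.span_le]
    rintro _ ⟨y, hy, rfl⟩
    exact sub_mem (Submodule.subset_span hy) (Submodule.subset_span hx)
  · exact Submodule.span_mono (singleton_subset_iff.2 hx)

variable {K V : Type*} [DivisionRing K] [AddCommGroup V] [Module K V]

lemma finrank_span_eq_finrank_vectorSpan_add_one [FiniteDimensional K V] {s : Set V}
    (hs : s.Nonempty) (h0 : 0 ∉ affineSpan K s) :
    finrank K (Submodule.span K s) = finrank K (vectorSpan K s) + 1 := by
  obtain ⟨x, hx⟩ := hs
  have hx_notMem : x ∉ vectorSpan K s := fun hxv ↦ h0 <| by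
    simpa only [vadd_eq_add, neg_add_cancel] using
      vadd_mem_affineSpan_of_mem_affineSpan_of_mem_vectorSpan
        (mem_affineSpan K hx) (neg_mem hxv)
  rw [span_eq_vectorSpan_sup_span_singleton hx,
    Submodule.finrank_sup_span_singleton hx_notMem]

lemma encard_pair_eq_two_pow_finrank_vectorSpan (x y : V) :
    ({x, y} : Set V).encard = 2 ^ finrank K (vectorSpan K {x, y}) := by
  obtain rfl | hxy := eq_or_ne x y
  · rw [pair_eq_singleton, encard_singleton, vectorSpan_singleton, finrank_bot, pow_zero]
  · rw [encard_pair hxy, vectorSpan_pair, vsub_eq_sub, finrank_span_singleton (sub_ne_zero.2 hxy),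
      pow_one]

end Spans

section ProductSpans

variable {ι K : Type*} {E : ι → Type*} [∀ i, AddCommGroup (E i)]

lemma vectorSpan_univ_pi [Finite ι] [Ring K] [∀ i, Module K (E i)] {s : ∀ i, Set (E i)}
    (hs : ∀ i, (s i).Nonempty) :
    vectorSpan K (univ.pi s) = Submodule.pi univ fun i ↦ vectorSpan K (s i) := by
  classical
  apply le_antisymm
  · rw [vectorSpan_def, Submodule.span_le]
    rintro _ ⟨x, hx, y, hy, rfl⟩ i hi
    exact vsub_mem_vectorSpan K (hx i hi) (hy i hi)
  · rw [← Submodule.iSup_map_single, iSup_le_iff]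
    intro i
    rw [vectorSpan_def, Submodule.map_span, Submodule.span_le]
    rintro _ ⟨_, ⟨a, ha, b, hb, rfl⟩, rfl⟩
    choose x hx using hs
    have hupdate : ∀ c ∈ s i, Function.update x i c ∈ univ.pi s := fun c hc ↦
      (update_mem_pi_iff_of_mem fun j _ ↦ hx j).2 fun _ ↦ hc
    have hsub : Pi.single i (a - b) = Function.update x i a - Function.update x i b := by
      rw [← Function.update_sub, sub_self]; rfl
    simpa [hsub] using vsub_mem_vectorSpan K (hupdate a ha) (hupdate b hb)

lemma finrank_submodule_univ_pi [Fintype ι] [DivisionRing K] [∀ i, Module K (E i)]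
    [∀ i, FiniteDimensional K (E i)] (p : ∀ i, Submodule K (E i)) :
    finrank K (Submodule.pi univ p) = ∑ i, finrank K (p i) := by
  let incl : (∀ i, p i) →ₗ[K] ∀ i, E i := LinearMap.pi fun i ↦ (p i).subtype ∘ₗ LinearMap.proj i
  have hincl : Function.Injective incl := fun x y h ↦ funext fun i ↦ Subtype.ext (congrFun h i)
  have hrange : LinearMap.range incl = Submodule.pi univ p := by
    ext x
    exact ⟨by rintro ⟨y, rfl⟩ i -; exact (y i).2, fun hx ↦ ⟨fun i ↦ ⟨x i, hx i trivial⟩, rfl⟩⟩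
  rw [← hrange, LinearMap.finrank_range_of_inj hincl, finrank_pi_fintype]

end ProductSpans

lemma eq_univ_pi_eval_image_of_update_mem {ι : Type*} [Finite ι] [DecidableEq ι] {α : ι → Type*}
    {F : Set (∀ i, α i)} (hne : F.Nonempty)
    (hF : ∀ x ∈ F, ∀ y ∈ F, ∀ i, Function.update x i (y i) ∈ F) :
    F = univ.pi fun i ↦ Function.eval i '' F := by
  have := Fintype.ofFinite ι
  refine (subset_pi_eval_image univ F).antisymm fun x hx ↦ ?_
  choose y hyF hyx using fun i ↦ hx i trivial
  have hagree (s : Finset ι) : ∃ z ∈ F, ∀ i ∈ s, z i = x i := by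
    induction s using Finset.induction_on with
    | empty => exact hne.imp fun z hz ↦ ⟨hz, by simp⟩
    | insert i s _ ih =>
      obtain ⟨z, hzF, hz⟩ := ih
      refine ⟨Function.update z i (y i i), hF z hzF _ (hyF i) i, fun j hj ↦ ?_⟩
      obtain rfl | hji := eq_or_ne j i
      · simpa using hyx j
      · simpa [hji] using hz j (Finset.mem_of_mem_insert_of_ne hj hji)
  obtain ⟨z, hzF, hz⟩ := hagree Finset.univ
  rwa [← funext fun i ↦ hz i (Finset.mem_univ i)]

section ExtremeSubsets

lemma isExtreme_iff_forall_Ioo {𝕜 V : Type*} [Ring 𝕜] [PartialOrder 𝕜] [AddRightMono 𝕜]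
    [AddCommGroup V] [Module 𝕜 V] {A B : Set V} :
    IsExtreme 𝕜 A B ↔ B ⊆ A ∧ ∀ x ∈ A, ∀ y ∈ A, ∀ t : 𝕜, t ∈ Ioo (0 : 𝕜) 1 →
      (1 - t) • x + t • y ∈ B → x ∈ B ∧ y ∈ B := by
  constructor
  · refine fun h ↦ ⟨h.subset, fun x hx y hy t ht hB ↦ ?_⟩
    have hmem : (1 - t) • x + t • y ∈ openSegment 𝕜 x y := by
      rw [openSegment_eq_image]; exact mem_image_of_mem _ ht
    exact ⟨h.left_mem_of_mem_openSegment hx hy hB hmem,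
      h.right_mem_of_mem_openSegment hx hy hB hmem⟩
  · refine fun ⟨hsub, h⟩ ↦ ⟨hsub, fun x hx y hy z hz hmem ↦ ?_⟩
    rw [openSegment_eq_image] at hmem
    obtain ⟨t, ht, rfl⟩ := hmem
    exact (h x hx y hy t ht hz).1

lemma isExtreme_eval_image {ι 𝕜 : Type*} {E : ι → Type*} [Semiring 𝕜] [PartialOrder 𝕜]
    [∀ i, AddCommMonoid (E i)] [∀ i, Module 𝕜 (E i)] {C : ∀ i, Set (E i)} {F : Set (∀ i, E i)}
    (hF : IsExtreme 𝕜 (univ.pi C) F) (i : ι) :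
    IsExtreme 𝕜 (C i) (Function.eval i '' F) where
  subset := by
    rintro _ ⟨x, hx, rfl⟩
    exact hF.subset hx i trivial
  left_mem_of_mem_openSegment := by
    classical
    rintro a ha b hb _ ⟨x, hx, rfl⟩ hmem
    have hupdate : ∀ c ∈ C i, Function.update x i c ∈ univ.pi C := fun c hc ↦
      (update_mem_pi_iff_of_mem (hF.subset hx)).2 fun _ ↦ hc
    have hxmem : x ∈ openSegment 𝕜 (Function.update x i a) (Function.update x i b) := by
      rw [← Pi.image_update_openSegment]
      exact ⟨x i, hmem, Function.update_eq_self i x⟩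
    exact ⟨_, hF.left_mem_of_mem_openSegment (hupdate a ha) (hupdate b hb) hx hxmem,
      Function.update_self i a x⟩

variable {ι 𝕜 : Type*} {E : ι → Type*} [Field 𝕜] [LinearOrder 𝕜] [IsStrictOrderedRing 𝕜]
  [∀ i, AddCommGroup (E i)] [∀ i, Module 𝕜 (E i)] {C : ∀ i, Set (E i)} {F : Set (∀ i, E i)}

lemma update_mem_of_isExtreme_univ_pi [DecidableEq ι] (hF : IsExtreme 𝕜 (univ.pi C) F)
    (hconv : Convex 𝕜 F) {x y : ∀ i, E i} (hx : x ∈ F) (hy : y ∈ F) (i : ι) :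
    Function.update x i (y i) ∈ F := by
  have hswap : midpoint 𝕜 (Function.update x i (y i)) (Function.update y i (x i)) =
      midpoint 𝕜 x y := by
    ext j
    obtain rfl | hji := eq_or_ne j i
    · simp [pi_midpoint_apply, midpoint_comm]
    · simp [pi_midpoint_apply, hji]
  have hxC := hF.subset hx
  have hyC := hF.subset hy
  refine hF.left_mem_of_mem_openSegment
    ((update_mem_pi_iff_of_mem hxC).2 (hyC i)) ((update_mem_pi_iff_of_mem hyC).2 (hxC i))
    (hconv.midpoint_mem hx hy) ?_
  rw [← hswap]
  exact midpoint_mem_openSegment _ _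

lemma eq_univ_pi_eval_image_of_isExtreme [Finite ι] (hF : IsExtreme 𝕜 (univ.pi C) F)
    (hconv : Convex 𝕜 F) (hne : F.Nonempty) : F = univ.pi fun i ↦ Function.eval i '' F := by
  classical
  exact eq_univ_pi_eval_image_of_update_mem hne fun _ hx _ hy i ↦
    update_mem_of_isExtreme_univ_pi hF hconv hx hy i

end ExtremeSubsets

section Boxes

lemma closedBall_zero_one_eq_Icc {ι : Type*} [Fintype ι] :
    closedBall (0 : ι → ℝ) 1 = Icc (-1) 1 := by
  rw [closedBall_pi _ zero_le_one, ← pi_univ_Icc]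
  simp [Real.closedBall_eq_Icc]

lemma eq_singleton_or_eq_Icc_of_isExtreme_Icc {a b : ℝ} {G : Set ℝ}
    (hG : IsExtreme ℝ (Icc a b) G) (hconv : Convex ℝ G) (hne : G.Nonempty) :
    G = {a} ∨ G = {b} ∨ G = Icc a b := by
  have hab : a ≤ b := (hne.mono hG.subset).elim fun x hx ↦ hx.1.trans hx.2
  have hIcc : a ∈ G → b ∈ G → G = Icc a b := fun ha hb ↦
    hG.subset.antisymm (hconv.ordConnected.out ha hb)
  by_cases hint : ∃ x ∈ G, x ∈ Ioo a b
  · obtain ⟨x, hxG, hx⟩ := hint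
    have hseg : x ∈ openSegment ℝ a b := by rwa [openSegment_eq_Ioo (hx.1.trans hx.2)]
    exact .inr <| .inr <| hIcc
      (hG.left_mem_of_mem_openSegment (left_mem_Icc.2 hab) (right_mem_Icc.2 hab) hxG hseg)
      (hG.right_mem_of_mem_openSegment (left_mem_Icc.2 hab) (right_mem_Icc.2 hab) hxG hseg)
  · have hendpoints : G ⊆ {a, b} := fun x hx ↦
      (eq_endpoints_or_mem_Ioo_of_mem_Icc (hG.subset hx)).imp_right fun h ↦
        h.resolve_right fun hx' ↦ hint ⟨x, hx, hx'⟩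
    rcases subset_pair_iff_eq.1 hendpoints with h | h | h | h
    · exact absurd h hne.ne_empty
    · exact .inl h
    · exact .inr (.inl h)
    · exact .inr (.inr (hIcc (by simp [h]) (by simp [h])))

lemma encard_extremePoints_of_isExtreme_Icc {a b : ℝ} {G : Set ℝ}
    (hG : IsExtreme ℝ (Icc a b) G) (hconv : Convex ℝ G) (hne : G.Nonempty) :
    (extremePoints ℝ G).encard = 2 ^ finrank ℝ (vectorSpan ℝ (extremePoints ℝ G)) := by
  have hab : a ≤ b := (hne.mono hG.subset).elim fun x hx ↦ hx.1.trans hx.2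
  rcases eq_singleton_or_eq_Icc_of_isExtreme_Icc hG hconv hne with rfl | rfl | rfl
  · rw [extremePoints_singleton, encard_singleton, vectorSpan_singleton, finrank_bot, pow_zero]
  · rw [extremePoints_singleton, encard_singleton, vectorSpan_singleton, finrank_bot, pow_zero]
  · rw [extremePoints_Icc hab]
    exact encard_pair_eq_two_pow_finrank_vectorSpan a b

lemma encard_extremePoints_of_isExtreme_pi_Icc {ι : Type*} [Finite ι] {a b : ι → ℝ}
    {F : Set (ι → ℝ)} (hF : IsExtreme ℝ (Icc a b) F) (hconv : Convex ℝ F) (hne : F.Nonempty) :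
    (extremePoints ℝ F).encard = 2 ^ finrank ℝ (vectorSpan ℝ (extremePoints ℝ F)) := by
  have := Fintype.ofFinite ι
  rw [← pi_univ_Icc] at hF
  have hfactor (i : ι) := encard_extremePoints_of_isExtreme_Icc (isExtreme_eval_image hF i)
    (hconv.is_linear_image (LinearMap.proj (R := ℝ) i).isLinear) (hne.image _)
  have hfactor_ne (i : ι) : (extremePoints ℝ (Function.eval i '' F)).Nonempty := by
    rw [← encard_ne_zero, hfactor]
    positivity
  rw [eq_univ_pi_eval_image_of_isExtreme hF hconv hne, extremePoints_pi,
    encard_pi_eq_prod_encard, vectorSpan_univ_pi hfactor_ne, finrank_submodule_univ_pi,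
    ← Finset.prod_pow_eq_pow_sum]
  exact Finset.prod_congr rfl fun i _ ↦ hfactor i

end Boxes

lemma notMem_affineSpan_of_convex_subset_sphere {V : Type*} [SeminormedAddCommGroup V]
    [NormedSpace ℝ V] {s : Set V} {c : V} {r : ℝ} (hr : 0 < r) (hs : Convex ℝ s)
    (hsub : s ⊆ sphere c r) : c ∉ affineSpan ℝ s := by
  obtain ⟨f, u, hball, hsu⟩ := geometric_hahn_banach_open (convex_ball c r) isOpen_ball hs
    (sphere_disjoint_ball.symm.mono_right hsub)
  have hclosedBall : closedBall c r ⊆ {x | f x ≤ u} := by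
    rw [← closure_ball c hr.ne']
    exact closure_minimal (fun x hx ↦ (hball x hx).le) (isClosed_le f.continuous continuous_const)
  have hconst : ∀ x ∈ affineSpan ℝ s, f x = u := by
    have hlevel : affineSpan ℝ s ≤
        (affineSpan ℝ {u}).comap (f : V →ₗ[ℝ] ℝ).toAffineMap :=
      affineSpan_le.2 fun x hx ↦ by
        simpa using (hclosedBall (sphere_subset_closedBall (hsub hx))).antisymm (hsu x hx)
    intro x hx
    simpa using hlevel hx
  exact fun hc ↦ (hball c (mem_ball_self hr)).ne (hconst c hc)

theorem stmt_3_general {ι : Type*} [Finite ι] {k : ℕ} {a b : ι → ℝ} {F : Set (ι → ℝ)}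
    (hF : IsExtreme ℝ (Icc a b) F) (hconv : Convex ℝ F) (h0 : 0 ∉ affineSpan ℝ F)
    (hcard : (extremePoints ℝ F).encard = 2 ^ k) :
    finrank ℝ (Submodule.span ℝ (extremePoints ℝ F)) = k + 1 := by
  have hext_ne : (extremePoints ℝ F).Nonempty := by
    rw [← encard_ne_zero, hcard]
    positivity
  have hdim : finrank ℝ (vectorSpan ℝ (extremePoints ℝ F)) = k := by
    rw [encard_extremePoints_of_isExtreme_pi_Icc hF hconv
      (hext_ne.mono extremePoints_subset)] at hcard
    exact Nat.pow_right_injective le_rfl (by exact_mod_cast hcard)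
  rw [finrank_span_eq_finrank_vectorSpan_add_one hext_ne
    fun h ↦ h0 (affineSpan_mono ℝ extremePoints_subset h), hdim]

theorem stmt_3 {n k : ℕ} (F : Set (Fin n → ℝ)) (hFne : F.Nonempty)
    (hFconv : Convex ℝ F)
    (hFsub : F ⊆ sphere (0 : Fin n → ℝ) 1)
    (hface : ∀ x ∈ closedBall (0 : Fin n → ℝ) 1, ∀ y ∈ closedBall (0 : Fin n → ℝ) 1,
      ∀ t : ℝ, t ∈ Ioo (0 : ℝ) 1 → (1 - t) • x + t • y ∈ F → x ∈ F ∧ y ∈ F)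
    (hcard : (extremePoints ℝ F).encard = 2 ^ k) :
    finrank ℝ (Submodule.span ℝ (extremePoints ℝ F)) = k + 1 :=
  have hF : IsExtreme ℝ (Icc (-1) 1) F := closedBall_zero_one_eq_Icc (ι := Fin n) ▸
    isExtreme_iff_forall_Ioo.2 ⟨hFsub.trans sphere_subset_closedBall, hface⟩
  stmt_3_general hF hFconv (notMem_affineSpan_of_convex_subset_sphere one_pos hFconv hFsub) hcard
end

section
/- Let X = ℓ∞ⁿ and let Y be a two-dimensional real normed linear space. Let T : X → Y be a bounded linear operator with ‖T‖ = 1 such that Ext(B_X) ⊆ M_T and Tx is smooth for every x ∈ Ext(B_X). If rank(T) = 1, then T is n-smooth, i.e., dim span J(T) = n. -/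
open Metric Set Module

/-- A point is smooth if it has a unique supporting functional. -/
def IsSmoothPoint {E : Type*} [NormedAddCommGroup E] [NormedSpace ℝ E] (x : E) : Prop :=
  ∃ g, suppFunctionals x = {g}

/-! Write `h ⊗ y` for the operator `x ↦ h x • y` and `g ⊗ x` for the functional `S ↦ g (S x)` on
operators. A rank one operator of norm one with a smooth value `w = T x₀` is `T = f ⊗ w`, where
`J w = {g}` and `f = g ∘ T`.

Let `F ∈ J T`. If `f = p + q` with `‖p - q‖ ≤ 1`, then `p ⊗ u + q ⊗ w` has norm at most one for
every `u` in the unit ball, and equals `T` at `u = w`; hence the functional `u ↦ F (p ⊗ u)` attains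
its norm at `w`, so smoothness makes it a multiple of `g`. Every `h` with `‖h‖ ≤ 1` is `p - q` for
such a pair, so `F (h ⊗ y) = F (h ⊗ w) * g y` for all `h` and `y`. When `X` is finite-dimensional
this says `F = g ⊗ x` for some `x`, and therefore `J T = {g ⊗ x | ‖x‖ ≤ 1, f x = 1}`, whose span has
the dimension of the span of `M_T`. If `M_T` contains the extreme points of the unit ball, it spans
`X` by Krein-Milman. -/

section SmoothPoint

variable {E : Type*} [NormedAddCommGroup E] [NormedSpace ℝ E] {w : E} {φ g : E →L[ℝ] ℝ}

theorem mem_suppFunctionals_of_norm_le_one (hw : ‖w‖ ≤ 1) (hφ : ‖φ‖ ≤ 1) (hφw : φ w = 1) :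
    φ ∈ suppFunctionals w := by
  refine ⟨hφ.antisymm ?_, hφw⟩
  calc 1 = ‖φ w‖ := by simp [hφw]
    _ ≤ ‖φ‖ := φ.unit_le_opNorm w hw

theorem eq_apply_smul_of_suppFunctionals_eq_singleton (hg : suppFunctionals w = {g})
    (hw : ‖w‖ ≤ 1) (hmax : ∀ u, ‖u‖ ≤ 1 → φ u ≤ φ w) : φ = φ w • g := by
  have hφw : 0 ≤ φ w := by simpa using hmax 0 (by simp)
  have hφ : ‖φ‖ ≤ φ w := φ.opNorm_le_of_unit_norm hφw fun u hu ↦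
    abs_le'.2 ⟨hmax u hu.le, by simpa using hmax (-u) (by simp [hu])⟩
  obtain h0 | hpos := hφw.eq_or_lt
  · rw [← h0, norm_le_zero_iff] at hφ
    simp [hφ]
  · have hmem : (φ w)⁻¹ • φ ∈ suppFunctionals w := by
      refine mem_suppFunctionals_of_norm_le_one hw ?_ (by simp [hpos.ne'])
      rw [norm_smul, norm_inv, Real.norm_of_nonneg hφw]
      exact inv_mul_le_one_of_le₀ hφ hφw
    rw [hg, mem_singleton_iff] at hmem
    rw [← hmem, smul_inv_smul₀ hpos.ne']

end SmoothPoint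

section RankOne

variable {X Y : Type*} [NormedAddCommGroup X] [NormedSpace ℝ X]
  [NormedAddCommGroup Y] [NormedSpace ℝ Y] {f p q : X →L[ℝ] ℝ} {g : Y →L[ℝ] ℝ} {u v w : Y}
  {F : (X →L[ℝ] Y) →L[ℝ] ℝ}

theorem norm_smulRight_add_smulRight_le_one (hadd : ‖p + q‖ ≤ 1) (hsub : ‖p - q‖ ≤ 1)
    (hu : ‖u‖ ≤ 1) (hv : ‖v‖ ≤ 1) : ‖p.smulRight u + q.smulRight v‖ ≤ 1 := by
  refine ContinuousLinearMap.opNorm_le_bound _ zero_le_one fun x ↦ ?_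
  have h_add : |p x + q x| ≤ 1 * ‖x‖ := (p + q).le_of_opNorm_le hadd x
  have h_sub : |p x - q x| ≤ 1 * ‖x‖ := (p - q).le_of_opNorm_le hsub x
  have h_abs : |p x| + |q x| ≤ 1 * ‖x‖ := by grind
  calc ‖p x • u + q x • v‖ ≤ |p x| * ‖u‖ + |q x| * ‖v‖ := by
        simpa only [norm_smul, Real.norm_eq_abs] using norm_add_le (p x • u) (q x • v)
    _ ≤ |p x| * 1 + |q x| * 1 := by gcongr
    _ ≤ 1 * ‖x‖ := by simpa only [mul_one] using h_abs

theorem apply_smulRight_eq_mul_of_norm_sub_le_one (hg : suppFunctionals w = {g}) (hw : ‖w‖ ≤ 1)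
    (hadd : ‖p + q‖ ≤ 1) (hsub : ‖p - q‖ ≤ 1) (hF : F ∈ suppFunctionals ((p + q).smulRight w))
    (y : Y) : F (p.smulRight y) = F (p.smulRight w) * g y := by
  have hmax (u : Y) (hu : ‖u‖ ≤ 1) : F (p.smulRight u) ≤ F (p.smulRight w) := by
    have hsplit : (p + q).smulRight w = p.smulRight w + q.smulRight w := by
      ext x; simp [add_smul]
    have hle : F (p.smulRight u + q.smulRight w) ≤ F (p.smulRight w + q.smulRight w) :=
      calc F (p.smulRight u + q.smulRight w) ≤ ‖F‖ := (le_abs_self _).trans <|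
            F.unit_le_opNorm _ (norm_smulRight_add_smulRight_le_one hadd hsub hu hw)
        _ = F (p.smulRight w + q.smulRight w) := by rw [← hsplit, hF.1, hF.2]
    simpa using hle
  exact DFunLike.congr_fun (eq_apply_smul_of_suppFunctionals_eq_singleton
    (φ := F.comp (ContinuousLinearMap.smulRightL ℝ X Y p)) hg hw hmax) y

theorem apply_smulRight_eq_mul_of_mem_suppFunctionals (hg : suppFunctionals w = {g})
    (hf : ‖f‖ ≤ 1) (hw : ‖w‖ ≤ 1) (hF : F ∈ suppFunctionals (f.smulRight w))
    (h : X →L[ℝ] ℝ) (y : Y) : F (h.smulRight y) = F (h.smulRight w) * g y := by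
  obtain ⟨c, hc, hch⟩ : ∃ c : ℝ, c ≠ 0 ∧ ‖c • h‖ ≤ 1 := by
    refine ⟨(1 + ‖h‖)⁻¹, by positivity, ?_⟩
    rw [norm_smul, norm_inv, Real.norm_of_nonneg (by positivity)]
    exact inv_mul_le_one_of_le₀ (by linarith) (by positivity)
  set p := (2⁻¹ : ℝ) • (f + c • h)
  set q := (2⁻¹ : ℝ) • (f - c • h)
  have hpq : p + q = f := by module
  have hsub : p - q = c • h := by module
  have hadd_le : ‖p + q‖ ≤ 1 := hpq ▸ hf
  have hsub_le : ‖p - q‖ ≤ 1 := hsub ▸ hch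
  have hF' : F ∈ suppFunctionals ((p + q).smulRight w) := hpq ▸ hF
  have hFp : F (p.smulRight y) = F (p.smulRight w) * g y :=
    apply_smulRight_eq_mul_of_norm_sub_le_one hg hw hadd_le hsub_le hF' y
  have hFq : F (q.smulRight y) = F (q.smulRight w) * g y := by
    rw [add_comm] at hadd_le hF'
    rw [norm_sub_rev] at hsub_le
    exact apply_smulRight_eq_mul_of_norm_sub_le_one hg hw hadd_le hsub_le hF' y
  have hdiff (z : Y) : c * F (h.smulRight z) = F (p.smulRight z) - F (q.smulRight z) := by
    rw [← smul_eq_mul, ← map_smul, ← map_sub]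
    congr 1
    ext x
    have hx : c * h x = p x - q x := (DFunLike.congr_fun hsub x).symm
    simp [smul_smul, hx, sub_smul]
  apply mul_left_cancel₀ hc
  rw [hdiff, hFp, hFq, ← sub_mul, ← hdiff, mul_assoc]

theorem eq_smulRight_of_finrank_range_eq_one {T : X →L[ℝ] Y}
    (hrank : finrank ℝ (LinearMap.range (T : X →ₗ[ℝ] Y)) = 1) {x₀ : X} (hg : g (T x₀) = 1) :
    T = (g.comp T).smulRight (T x₀) := by
  have hne : (⟨T x₀, x₀, rfl⟩ : LinearMap.range (T : X →ₗ[ℝ] Y)) ≠ 0 := fun h ↦ by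
    have : T x₀ = 0 := congrArg Subtype.val h
    simp [this] at hg
  ext x
  obtain ⟨c, hc⟩ := (finrank_eq_one_iff_of_nonzero' _ hne).1 hrank ⟨T x, x, rfl⟩
  have hcx : c • T x₀ = T x := congrArg Subtype.val hc
  simp [← hcx, hg]

end RankOne

section Evaluation

variable {X Y : Type*} [NormedAddCommGroup X] [NormedSpace ℝ X]
  [NormedAddCommGroup Y] [NormedSpace ℝ Y] {g : Y →L[ℝ] ℝ} {w : Y}

/-- The linear map sending `x` to the elementary tensor `g ⊗ x`, that is, to the functional
`S ↦ g (S x)` on operators. -/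
noncomputable def evalFunctional (X : Type*) [NormedAddCommGroup X] [NormedSpace ℝ X]
    (g : Y →L[ℝ] ℝ) : X →L[ℝ] (X →L[ℝ] Y) →L[ℝ] ℝ :=
  (ContinuousLinearMap.compL ℝ (X →L[ℝ] Y) Y ℝ g).comp (ContinuousLinearMap.apply ℝ Y)

@[simp]
theorem evalFunctional_apply_apply (g : Y →L[ℝ] ℝ) (x : X) (S : X →L[ℝ] Y) :
    evalFunctional X g x S = g (S x) :=
  rfl

theorem norm_evalFunctional_apply_le (g : Y →L[ℝ] ℝ) (x : X) :
    ‖evalFunctional X g x‖ ≤ ‖g‖ * ‖x‖ := by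
  refine ContinuousLinearMap.opNorm_le_bound _ (by positivity) fun S ↦ ?_
  calc ‖g (S x)‖ ≤ ‖g‖ * (‖S‖ * ‖x‖) := g.le_opNorm_of_le (S.le_opNorm x)
    _ = ‖g‖ * ‖x‖ * ‖S‖ := by ring

theorem evalFunctional_injective (hg : g ≠ 0) : Function.Injective (evalFunctional X g) := by
  obtain ⟨y, hy⟩ := DFunLike.ne_iff.1 hg
  refine (injective_iff_map_eq_zero _).2 fun x hx ↦ ?_
  refine SeparatingDual.eq_zero_of_forall_dual_eq_zero (R := ℝ) fun h ↦ ?_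
  have hxy : evalFunctional X g x (h.smulRight y) = 0 := by simp [hx]
  exact (by simpa using hxy : h x = 0 ∨ g y = 0).resolve_right hy

theorem norm_le_one_of_norm_evalFunctional_le_one {x : X} (hw : ‖w‖ ≤ 1) (hgw : g w = 1)
    (hx : ‖evalFunctional X g x‖ ≤ 1) : ‖x‖ ≤ 1 := by
  refine NormedSpace.norm_le_dual_bound ℝ x zero_le_one fun h ↦ ?_
  calc ‖h x‖ = ‖evalFunctional X g x (h.smulRight w)‖ := by simp [hgw]
    _ ≤ 1 * ‖h.smulRight w‖ := ContinuousLinearMap.le_of_opNorm_le _ hx _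
    _ ≤ 1 * ‖h‖ := by
      rw [ContinuousLinearMap.norm_smulRight_apply]
      gcongr
      exact mul_le_of_le_one_right (norm_nonneg h) hw

variable [FiniteDimensional ℝ X]

theorem exists_eq_evalFunctional_of_forall_apply_smulRight {F : (X →L[ℝ] Y) →L[ℝ] ℝ}
    (hF : ∀ (h : X →L[ℝ] ℝ) (y : Y), F (h.smulRight y) = F (h.smulRight w) * g y) :
    ∃ x, F = evalFunctional X g x := by
  let b := finBasis ℝ X
  let coord (i : Fin (finrank ℝ X)) : X →L[ℝ] ℝ := LinearMap.toContinuousLinearMap (b.coord i)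
  refine ⟨∑ i, F ((coord i).smulRight w) • b i, ?_⟩
  ext S
  have hS : S = ∑ i, (coord i).smulRight (S (b i)) := by
    ext x
    conv_lhs => rw [← b.sum_repr x, map_sum]
    simp [coord]
  calc F S = ∑ i, F ((coord i).smulRight (S (b i))) := by rw [← map_sum, ← hS]
    _ = ∑ i, F ((coord i).smulRight w) * g (S (b i)) := by simp only [hF _ (S _)]
    _ = evalFunctional X g (∑ i, F ((coord i).smulRight w) • b i) S := by simp

theorem suppFunctionals_smulRight_eq_image {f : X →L[ℝ] ℝ} (hg : suppFunctionals w = {g})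
    (hf : ‖f‖ ≤ 1) (hw : ‖w‖ ≤ 1) :
    suppFunctionals (f.smulRight w) = evalFunctional X g '' {x | ‖x‖ ≤ 1 ∧ f x = 1} := by
  obtain ⟨hg_norm, hgw⟩ : g ∈ suppFunctionals w := hg ▸ rfl
  apply Subset.antisymm
  · intro F hF
    obtain ⟨x, rfl⟩ := exists_eq_evalFunctional_of_forall_apply_smulRight
      (apply_smulRight_eq_mul_of_mem_suppFunctionals hg hf hw hF)
    exact ⟨x, ⟨norm_le_one_of_norm_evalFunctional_le_one hw hgw hF.1.le,
      by simpa [hgw] using hF.2⟩, rfl⟩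
  · rintro _ ⟨x, ⟨hx, hfx⟩, rfl⟩
    refine mem_suppFunctionals_of_norm_le_one ?_ ?_ (by simp [hfx, hgw])
    · rw [ContinuousLinearMap.norm_smulRight_apply]
      exact mul_le_one₀ hf (norm_nonneg w) hw
    · simpa [hg_norm] using (norm_evalFunctional_apply_le g x).trans
        (mul_le_one₀ hg_norm.le (norm_nonneg x) hx)

end Evaluation

section NormAttainment

variable {X Y : Type*} [NormedAddCommGroup X] [NormedSpace ℝ X]
  [NormedAddCommGroup Y] [NormedSpace ℝ Y]

/-- The norm attainment set `M_T`: the unit vectors at which `T` attains its operator norm. -/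
def normAttainmentSet (T : X →L[ℝ] Y) : Set X :=
  {x ∈ sphere (0 : X) 1 | ‖T x‖ = ‖T‖}

theorem span_normAttainmentSet_eq_span_setOf_apply_eq_one {f : X →L[ℝ] ℝ} (hf : ‖f‖ = 1) :
    Submodule.span ℝ (normAttainmentSet f) = Submodule.span ℝ {x | ‖x‖ ≤ 1 ∧ f x = 1} := by
  refine le_antisymm (Submodule.span_le.2 ?_) (Submodule.span_mono ?_)
  · rintro x ⟨hx, hfx⟩
    have hx1 : ‖x‖ ≤ 1 := (mem_sphere_zero_iff_norm.1 hx).le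
    obtain hpos | hneg := eq_or_eq_neg_of_abs_eq (hfx.trans hf)
    · exact Submodule.subset_span ⟨hx1, hpos⟩
    · rw [SetLike.mem_coe, ← Submodule.neg_mem_iff]
      exact Submodule.subset_span ⟨by simpa using hx1, by simp [hneg]⟩
  · rintro x ⟨hx, hfx⟩
    refine ⟨mem_sphere_zero_iff_norm.2 (hx.antisymm ?_), by simp [hfx, hf]⟩
    simpa [hfx, hf] using f.le_opNorm x

theorem normAttainmentSet_smulRight (f : X →L[ℝ] ℝ) {w : Y} (hw : w ≠ 0) :
    normAttainmentSet (f.smulRight w) = normAttainmentSet f := by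
  ext x
  simp [normAttainmentSet, norm_smul, ContinuousLinearMap.norm_smulRight_apply, hw]

variable [FiniteDimensional ℝ X]

theorem finrank_span_suppFunctionals_smulRight {f : X →L[ℝ] ℝ} {w : Y} (hsm : IsSmoothPoint w)
    (hf : ‖f‖ = 1) (hw : ‖w‖ ≤ 1) :
    finrank ℝ (Submodule.span ℝ (suppFunctionals (f.smulRight w))) =
      finrank ℝ (Submodule.span ℝ (normAttainmentSet (f.smulRight w))) := by
  obtain ⟨g, hg⟩ := hsm
  obtain ⟨-, hgw⟩ : g ∈ suppFunctionals w := hg ▸ rfl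
  have hg0 : g ≠ 0 := fun h ↦ by simp [h] at hgw
  have hw0 : w ≠ 0 := fun h ↦ by simp [h] at hgw
  rw [normAttainmentSet_smulRight f hw0, span_normAttainmentSet_eq_span_setOf_apply_eq_one hf,
    suppFunctionals_smulRight_eq_image hg hf.le hw, ← ContinuousLinearMap.coe_coe,
    Submodule.span_image]
  exact (Submodule.equivMapOfInjective _ (evalFunctional_injective hg0) _).finrank_eq.symm

theorem finrank_span_suppFunctionals_eq_finrank_span_normAttainmentSet {T : X →L[ℝ] Y}
    (hT : ‖T‖ = 1) {x₀ : X} (hx₀ : ‖x₀‖ ≤ 1) (hsm : IsSmoothPoint (T x₀))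
    (hrank : finrank ℝ (LinearMap.range (T : X →ₗ[ℝ] Y)) = 1) :
    finrank ℝ (Submodule.span ℝ (suppFunctionals T)) =
      finrank ℝ (Submodule.span ℝ (normAttainmentSet T)) := by
  have ⟨g, hg⟩ := hsm
  obtain ⟨hg_norm, hgw⟩ : g ∈ suppFunctionals (T x₀) := hg ▸ rfl
  have hf_le : ‖g.comp T‖ ≤ 1 := by simpa [hg_norm, hT] using g.opNorm_comp_le T
  have hf : ‖g.comp T‖ = 1 := (mem_suppFunctionals_of_norm_le_one hx₀ hf_le hgw).1
  rw [eq_smulRight_of_finrank_range_eq_one hrank hgw]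
  exact finrank_span_suppFunctionals_smulRight hsm hf (hT ▸ T.unit_le_opNorm x₀ hx₀)

theorem span_extremePoints_closedBall_eq_top :
    Submodule.span ℝ (extremePoints ℝ (closedBall (0 : X) 1)) = ⊤ := by
  have := FiniteDimensional.proper ℝ X
  set V := Submodule.span ℝ (extremePoints ℝ (closedBall (0 : X) 1))
  have hball : closedBall (0 : X) 1 ⊆ V := by
    rw [← closure_convexHull_extremePoints (isCompact_closedBall (0 : X) 1)
      (convex_closedBall 0 1)]
    exact closure_minimal (convexHull_min Submodule.subset_span V.convex)
      V.closed_of_finiteDimensional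
  refine V.eq_top_of_nonempty_interior' ⟨0, interior_mono hball ?_⟩
  exact ball_subset_interior_closedBall (mem_ball_self one_pos)

theorem stmt_4_general {T : X →L[ℝ] Y} (hT : ‖T‖ = 1)
    (hMT : extremePoints ℝ (closedBall (0 : X) 1) ⊆ normAttainmentSet T)
    {x₀ : X} (hx₀ : ‖x₀‖ ≤ 1) (hsm : IsSmoothPoint (T x₀))
    (hrank : finrank ℝ (LinearMap.range (T : X →ₗ[ℝ] Y)) = 1) :
    finrank ℝ (Submodule.span ℝ (suppFunctionals T)) = finrank ℝ X := by
  have hspan : Submodule.span ℝ (normAttainmentSet T) = ⊤ :=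
    top_unique (span_extremePoints_closedBall_eq_top.symm.trans_le (Submodule.span_mono hMT))
  rw [finrank_span_suppFunctionals_eq_finrank_span_normAttainmentSet hT hx₀ hsm hrank, hspan,
    finrank_top]

end NormAttainment

theorem stmt_4 {n : ℕ} {Y : Type*} [NormedAddCommGroup Y] [NormedSpace ℝ Y]
    [FiniteDimensional ℝ Y] (hY : finrank ℝ Y = 2)
    (T : (Fin n → ℝ) →L[ℝ] Y) (hT : ‖T‖ = 1)
    (hMT : extremePoints ℝ (closedBall (0 : Fin n → ℝ) 1) ⊆
      {x ∈ sphere (0 : Fin n → ℝ) 1 | ‖T x‖ = ‖T‖})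
    (hsm : ∀ x ∈ extremePoints ℝ (closedBall (0 : Fin n → ℝ) 1), IsSmoothPoint (T x))
    (hrank : finrank ℝ (LinearMap.range (T : (Fin n → ℝ) →ₗ[ℝ] Y)) = 1) :
    finrank ℝ (Submodule.span ℝ (suppFunctionals T)) = n := by
  obtain ⟨x₀, hx₀⟩ := (isCompact_closedBall (0 : Fin n → ℝ) 1).extremePoints_nonempty ⟨0, by simp⟩
  have hx₀_norm : ‖x₀‖ ≤ 1 := mem_closedBall_zero_iff.1 (extremePoints_subset hx₀)
  rw [stmt_4_general hT hMT hx₀_norm (hsm x₀ hx₀) hrank, finrank_fin_fun]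
end

section
/- Let X = ℓ∞ⁿ and let Y be a two-dimensional real normed linear space that is strictly convex and smooth (i.e., every y ∈ S_Y has exactly one supporting functional: J(y) is a singleton for every y ∈ S_Y). Let T : X → Y be a bounded linear operator with ‖T‖ = 1 such that Ext(B_X) ⊆ M_T. If rank(T) = 2, then T is (2n−2)-smooth, i.e., dim span J(T) = 2n − 2. -/
open Metric Set Module

/-!
A polyhedral unit ball embeds the operators `S` isometrically into a finite sup-normed power of
`Y` through `S ↦ (S ε)`, where `ε` runs over its extreme points. A functional supporting `T`
extends by Hahn–Banach to that power, and its coordinate at `ε` attains its maximum over the unit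
ball at `T ε`. Hence `J(T)` is spanned by the functionals `g ⊗ ε : S ↦ g (S ε)` with `g ∈ J(T ε)`.

For the cube, strict convexity gives `ε j * g (T (e j)) > 0` whenever `T (e j) ≠ 0`: flipping the
sign `ε j` yields another unit vector, on which `g` must be smaller. Thus the nonzero `T (e j)` are
linearly independent. In rank two there are exactly two of them, so `T ε` takes only four values
`±T p`, `±T m` on sign vectors. The sign vectors sent to `T p` span `ker T ⊕ ℝ p`, of dimension
`n - 1`, and likewise for `m`. As the supporting functionals of `T p` and `T m` are linearly
independent, the two families contribute `2 (n - 1)` dimensions.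
-/

section SupportingFunctionals

variable {E : Type*} [NormedAddCommGroup E] [NormedSpace ℝ E]

lemma mem_suppFunctionals_of_norm_le_one_s7 {x : E} {f : E →L[ℝ] ℝ} (hx : ‖x‖ ≤ 1) (hf : ‖f‖ ≤ 1)
    (hfx : f x = 1) : f ∈ suppFunctionals x := by
  refine ⟨le_antisymm hf ?_, hfx⟩
  calc (1 : ℝ) = f x := hfx.symm
    _ ≤ ‖f‖ * ‖x‖ := (le_abs_self _).trans (f.le_opNorm x)
    _ ≤ ‖f‖ := mul_le_of_le_one_right (norm_nonneg f) hx

lemma suppFunctionals_nonempty {x : E} (hx : ‖x‖ = 1) : (suppFunctionals x).Nonempty := by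
  obtain ⟨f, hf, hfx⟩ := exists_dual_vector ℝ x (by simp [hx])
  exact ⟨f, hf, by simpa [hx] using hfx⟩

lemma suppFunctionals_neg (x : E) : suppFunctionals (-x) = -suppFunctionals x := by
  ext f
  simp [suppFunctionals]

lemma apply_le_norm_of_mem_suppFunctionals {x : E} {f : E →L[ℝ] ℝ} (hf : f ∈ suppFunctionals x)
    (y : E) : f y ≤ ‖y‖ := by
  simpa [hf.1] using (le_abs_self _).trans (f.le_opNorm y)

lemma mem_span_suppFunctionals_of_forall_apply_le {x : E} (hx : ‖x‖ ≤ 1) {f : E →L[ℝ] ℝ}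
    (hf : ∀ y, ‖y‖ ≤ 1 → f y ≤ f x) : f ∈ Submodule.span ℝ (suppFunctionals x) := by
  have hfx : 0 ≤ f x := by simpa using hf 0 (by simp)
  have hnorm : ‖f‖ ≤ f x := by
    refine ContinuousLinearMap.opNorm_le_of_unit_norm hfx fun y hy => abs_le'.2 ⟨hf y hy.le, ?_⟩
    simpa using hf (-y) (by simp [hy])
  rcases hfx.eq_or_lt with hzero | hpos
  · have : f = 0 := norm_le_zero_iff.1 (hzero ▸ hnorm)
    simp [this]
  · have hmem : (f x)⁻¹ • f ∈ suppFunctionals x := by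
      refine mem_suppFunctionals_of_norm_le_one_s7 hx ?_ (by simp [hpos.ne'])
      rw [norm_smul, norm_inv, Real.norm_of_nonneg hfx]
      exact (inv_mul_le_one₀ hpos).2 hnorm
    simpa [smul_smul, hpos.ne'] using
      Submodule.smul_mem _ (f x) (Submodule.subset_span hmem)

lemma exists_extension_norm_eq_of_isometry {F : Type*} [NormedAddCommGroup F]
    [NormedSpace ℝ F] (R : E →ₗᵢ[ℝ] F) (φ : E →L[ℝ] ℝ) :
    ∃ ψ : F →L[ℝ] ℝ, (∀ x, ψ (R x) = φ x) ∧ ‖ψ‖ = ‖φ‖ := by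
  let φR : LinearMap.range R.toLinearMap →L[ℝ] ℝ :=
    φ.comp (R.equivRange.symm.toContinuousLinearEquiv : _ →L[ℝ] E)
  obtain ⟨ψ, hψ, hnorm⟩ := exists_extension_norm_eq _ φR
  refine ⟨ψ, fun x => ?_, hnorm.trans (φ.opNorm_comp_linearIsometryEquiv R.equivRange.symm)⟩
  simpa [φR] using hψ (R.equivRange x)

lemma apply_single_le_of_mem_suppFunctionals_pi {κ : Type*} [Fintype κ] [DecidableEq κ]
    {z : κ → E} (hz : ‖z‖ ≤ 1) {ψ : (κ → E) →L[ℝ] ℝ} (hψ : ψ ∈ suppFunctionals z) (k : κ) {y : E}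
    (hy : ‖y‖ ≤ 1) : ψ (Pi.single k y) ≤ ψ (Pi.single k (z k)) := by
  have hnorm : ‖z + Pi.single k (y - z k)‖ ≤ 1 := by
    refine (pi_norm_le_iff_of_nonneg zero_le_one).2 fun i => ?_
    rcases eq_or_ne i k with rfl | hik
    · simpa using hy
    · simpa [hik] using (norm_le_pi_norm z i).trans hz
  have hle := (apply_le_norm_of_mem_suppFunctionals hψ _).trans hnorm
  rw [map_add, hψ.2, Pi.single_sub, map_sub] at hle
  linarith

variable [StrictConvexSpace ℝ E]

lemma eq_of_mem_suppFunctionals {x y : E} (hx : ‖x‖ = 1) (hy : ‖y‖ = 1) {f : E →L[ℝ] ℝ}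
    (hfx : f ∈ suppFunctionals x) (hfy : f y = 1) : x = y := by
  refine eq_of_norm_eq_of_norm_add_eq (hx.trans hy.symm) (le_antisymm (norm_add_le x y) ?_)
  calc ‖x‖ + ‖y‖ = f (x + y) := by rw [map_add, hfx.2, hfy, hx, hy]
    _ ≤ ‖x + y‖ := apply_le_norm_of_mem_suppFunctionals hfx _

lemma linearIndependent_pair_of_mem_suppFunctionals {x y : E} (hx : ‖x‖ = 1) (hy : ‖y‖ = 1)
    (hxy : x ≠ y) (hxy' : x ≠ -y) {f g : E →L[ℝ] ℝ} (hf : f ∈ suppFunctionals x)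
    (hg : g ∈ suppFunctionals y) : LinearIndependent ℝ ![f, g] := by
  have hf0 : f ≠ 0 := norm_ne_zero_iff.1 (by simp [hf.1])
  refine (LinearIndependent.pair_iff' hf0).2 fun c hc => ?_
  have hcabs : |c| = 1 := by simpa [norm_smul, hf.1, hg.1] using congrArg norm hc
  have hcy : c * f y = 1 := by simpa [hg.2] using congrArg (· y) hc
  rcases (abs_eq zero_le_one).1 hcabs with rfl | rfl
  · exact hxy (eq_of_mem_suppFunctionals hx hy hf (by linarith))
  · exact hxy' (eq_of_mem_suppFunctionals hx (by simpa using hy) hf (by simpa using hcy))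

end SupportingFunctionals

section OperatorFunctionals

variable {X Y : Type*} [NormedAddCommGroup X] [NormedSpace ℝ X]
  [NormedAddCommGroup Y] [NormedSpace ℝ Y]

/-- The functional `g ⊗ x : S ↦ g (S x)` on the space of operators, as a bilinear map in `g` and
`x`. -/
noncomputable def tensorFunctional :
    (Y →L[ℝ] ℝ) →ₗ[ℝ] X →ₗ[ℝ] ((X →L[ℝ] Y) →L[ℝ] ℝ) :=
  LinearMap.mk₂ ℝ (fun g x => g.comp (ContinuousLinearMap.apply ℝ Y x))
    (fun _ _ _ => rfl) (fun _ _ _ => rfl)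
    (fun g x y => by ext; simp) (fun c g x => by ext; simp)

@[simp]
lemma tensorFunctional_apply (g : Y →L[ℝ] ℝ) (x : X) (S : X →L[ℝ] Y) :
    tensorFunctional g x S = g (S x) := rfl

lemma norm_tensorFunctional_le (g : Y →L[ℝ] ℝ) (x : X) :
    ‖tensorFunctional g x‖ ≤ ‖g‖ * ‖x‖ := by
  refine ContinuousLinearMap.opNorm_le_bound _ (by positivity) fun S => ?_
  calc ‖g (S x)‖ ≤ ‖g‖ * (‖S‖ * ‖x‖) := g.le_opNorm_of_le (S.le_opNorm x)
    _ = ‖g‖ * ‖x‖ * ‖S‖ := by ring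

lemma tensorFunctional_mem_suppFunctionals {T : X →L[ℝ] Y} (hT : ‖T‖ ≤ 1) {x : X} (hx : ‖x‖ ≤ 1)
    {g : Y →L[ℝ] ℝ} (hg : g ∈ suppFunctionals (T x)) :
    tensorFunctional g x ∈ suppFunctionals T := by
  refine mem_suppFunctionals_of_norm_le_one_s7 hT ((norm_tensorFunctional_le g x).trans ?_) hg.2
  rwa [hg.1, one_mul]

lemma disjoint_range_tensorFunctional {g h : Y →L[ℝ] ℝ} (hgh : LinearIndependent ℝ ![g, h]) :
    Disjoint (LinearMap.range (tensorFunctional (X := X) g))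
      (LinearMap.range (tensorFunctional (X := X) h)) := by
  rw [Submodule.disjoint_def]
  rintro _ ⟨x, rfl⟩ ⟨y, hxy⟩
  have hx : x = 0 := by
    refine SeparatingDual.eq_zero_of_forall_dual_eq_zero (R := ℝ) fun φ => ?_
    refine (LinearIndependent.pair_iff.1 hgh (φ x) (-φ y) ?_).1
    ext w
    have hw : φ y * h w = φ x * g w := by simpa using congrArg (· (φ.smulRight w)) hxy
    simp [hw]
  rw [hx, map_zero]

lemma tensorFunctional_injective {g : Y →L[ℝ] ℝ} (hg : g ≠ 0) :
    Function.Injective (tensorFunctional (X := X) g) := by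
  refine (injective_iff_map_eq_zero _).2 fun x hx => ?_
  refine SeparatingDual.eq_zero_of_forall_dual_eq_zero (R := ℝ) fun φ => ?_
  obtain ⟨w, hw⟩ : ∃ w, g w ≠ 0 := by
    by_contra! h
    exact hg (ContinuousLinearMap.ext h)
  have : φ x * g w = 0 := by simpa using congrArg (· (φ.smulRight w)) hx
  exact (mul_eq_zero.1 this).resolve_right hw

lemma finrank_sup_map_tensorFunctional {g h : Y →L[ℝ] ℝ} (hgh : LinearIndependent ℝ ![g, h])
    (P Q : Submodule ℝ X) [FiniteDimensional ℝ P] [FiniteDimensional ℝ Q] :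
    finrank ℝ (P.map (tensorFunctional g) ⊔ Q.map (tensorFunctional h) : Submodule ℝ _) =
      finrank ℝ P + finrank ℝ Q := by
  have hg : g ≠ 0 := by simpa using hgh.ne_zero 0
  have hh : h ≠ 0 := by simpa using hgh.ne_zero 1
  have hdisj := (disjoint_range_tensorFunctional (X := X) hgh).mono
    (LinearMap.map_le_range (p := P)) (LinearMap.map_le_range (p := Q))
  rw [← add_zero (finrank ℝ _), ← finrank_bot ℝ ((X →L[ℝ] Y) →L[ℝ] ℝ), ← hdisj.eq_bot,
    Submodule.finrank_sup_add_finrank_inf_eq,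
    ← (P.equivMapOfInjective _ (tensorFunctional_injective hg)).finrank_eq,
    ← (Q.equivMapOfInjective _ (tensorFunctional_injective hh)).finrank_eq]

end OperatorFunctionals

section PolyhedralDomain

variable {X Y : Type*} [NormedAddCommGroup X] [NormedSpace ℝ X] [FiniteDimensional ℝ X]
  [NormedAddCommGroup Y] [NormedSpace ℝ Y]

lemma opNorm_le_of_forall_mem_extremePoints {S : X →L[ℝ] Y} {C : ℝ} (hC : 0 ≤ C)
    (hS : ∀ x ∈ extremePoints ℝ (closedBall (0 : X) 1), ‖S x‖ ≤ C) : ‖S‖ ≤ C := by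
  have hclosed : IsClosed (S ⁻¹' closedBall 0 C) := isClosed_closedBall.preimage S.continuous
  have hconvex : Convex ℝ (S ⁻¹' closedBall 0 C) :=
    (convex_closedBall 0 C).linear_preimage S.toLinearMap
  have hball : closedBall (0 : X) 1 ⊆ S ⁻¹' closedBall 0 C := by
    have := FiniteDimensional.proper_real X
    rw [← closure_convexHull_extremePoints (isCompact_closedBall (0 : X) 1)
      (convex_closedBall 0 1)]
    exact closure_minimal (convexHull_min (fun x hx => by simpa using hS x hx) hconvex) hclosed
  exact ContinuousLinearMap.opNorm_le_of_unit_norm hC fun x hx => by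
    simpa using hball (by simpa using hx.le : x ∈ closedBall (0 : X) 1)

/-- Restriction of operators to the extreme points of a polyhedral unit ball, as an isometric
embedding into a finite sup-normed power of the codomain. -/
noncomputable def restrictExtremePoints (X Y : Type*) [NormedAddCommGroup X] [NormedSpace ℝ X]
    [FiniteDimensional ℝ X] [NormedAddCommGroup Y] [NormedSpace ℝ Y]
    [Fintype (extremePoints ℝ (closedBall (0 : X) 1))] :
    (X →L[ℝ] Y) →ₗᵢ[ℝ] (extremePoints ℝ (closedBall (0 : X) 1) → Y) where
  toFun S x := S x
  map_add' _ _ := rfl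
  map_smul' _ _ := rfl
  norm_map' S := by
    refine le_antisymm ((pi_norm_le_iff_of_nonneg (norm_nonneg S)).2 fun x => ?_)
      (opNorm_le_of_forall_mem_extremePoints (norm_nonneg _) fun x hx => ?_)
    · exact S.unit_le_opNorm x (by simpa using x.2.1)
    · exact norm_le_pi_norm (fun x : extremePoints ℝ (closedBall (0 : X) 1) => S x) ⟨x, hx⟩

@[simp]
lemma restrictExtremePoints_apply [Fintype (extremePoints ℝ (closedBall (0 : X) 1))]
    (S : X →L[ℝ] Y) (x : extremePoints ℝ (closedBall (0 : X) 1)) :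
    restrictExtremePoints X Y S x = S x := rfl

theorem span_suppFunctionals_eq_span_tensorFunctional
    (hfin : (extremePoints ℝ (closedBall (0 : X) 1)).Finite) {T : X →L[ℝ] Y} (hT : ‖T‖ ≤ 1) :
    Submodule.span ℝ (suppFunctionals T) =
      Submodule.span ℝ {φ | ∃ x ∈ extremePoints ℝ (closedBall (0 : X) 1),
        ∃ g ∈ suppFunctionals (T x), φ = tensorFunctional g x} := by
  classical
  have := hfin.fintype
  refine le_antisymm (Submodule.span_le.2 fun F hF => ?_) (Submodule.span_mono ?_)
  · obtain ⟨ψ, hψ, hψnorm⟩ := exists_extension_norm_eq_of_isometry (restrictExtremePoints X Y) F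
    let G (x : extremePoints ℝ (closedBall (0 : X) 1)) : Y →L[ℝ] ℝ :=
      ψ.comp (ContinuousLinearMap.single ℝ (fun _ => Y) x)
    have hF_eq : F = ∑ x, tensorFunctional (G x) x.1 := by
      ext S
      rw [← hψ S, ← LinearMap.sum_single_apply _ (restrictExtremePoints X Y S), map_sum]
      simp [G]
    have hψT : ψ ∈ suppFunctionals (restrictExtremePoints X Y T) :=
      ⟨hψnorm.trans hF.1, (hψ T).trans hF.2⟩
    have hmax (x : extremePoints ℝ (closedBall (0 : X) 1)) (y : Y) (hy : ‖y‖ ≤ 1) :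
        G x y ≤ G x (T x) :=
      apply_single_le_of_mem_suppFunctionals_pi
        (((restrictExtremePoints X Y).norm_map T).trans_le hT) hψT x hy
    rw [hF_eq]
    refine Submodule.sum_mem _ fun x _ => ?_
    have hTx : ‖T x‖ ≤ 1 := T.unit_le_opNorm x (by simpa using x.2.1) |>.trans hT
    refine Submodule.span_mono ?_ (Submodule.apply_mem_span_image_of_mem_span
      (tensorFunctional.flip x.1) (mem_span_suppFunctionals_of_forall_apply_le hTx (hmax x)))
    rintro _ ⟨g, hg, rfl⟩
    exact ⟨x, x.2, g, hg, rfl⟩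
  · rintro _ ⟨x, hx, g, hg, rfl⟩
    exact tensorFunctional_mem_suppFunctionals hT (by simpa using hx.1) hg

end PolyhedralDomain

/-- The vectors of `ι → ℝ` with all coordinates `±1`: the extreme points of the unit ball of
`ℓ∞`. -/
def signVectors (ι : Type*) : Set (ι → ℝ) := {ε | ∀ j, ε j = 1 ∨ ε j = -1}

section SignVectors

variable {ι : Type*}

lemma extremePoints_closedBall_pi_s7 [Fintype ι] :
    extremePoints ℝ (closedBall (0 : ι → ℝ) 1) = signVectors ι := by
  rw [closedBall_pi _ zero_le_one, extremePoints_pi]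
  ext ε
  simp [Real.closedBall_eq_Icc, signVectors, or_comm]

lemma finite_signVectors [Finite ι] : (signVectors ι).Finite :=
  Finite.pi' fun _ => toFinite {1, -1}

lemma neg_mem_signVectors {ε : ι → ℝ} (hε : ε ∈ signVectors ι) : -ε ∈ signVectors ι := by
  intro j
  simpa [neg_eq_iff_eq_neg, or_comm] using hε j

lemma abs_apply_of_mem_signVectors {ε : ι → ℝ} (hε : ε ∈ signVectors ι) (j : ι) : |ε j| = 1 :=
  (abs_eq zero_le_one).2 (hε j)

variable [DecidableEq ι]

lemma update_mem_signVectors {ε : ι → ℝ} (hε : ε ∈ signVectors ι) (j : ι) {c : ℝ}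
    (hc : c = 1 ∨ c = -1) : Function.update ε j c ∈ signVectors ι := by
  intro i
  rcases eq_or_ne i j with rfl | hij
  · simpa using hc
  · simpa [hij] using hε i

lemma flip_mem_signVectors {ε : ι → ℝ} (hε : ε ∈ signVectors ι) (j : ι) :
    ε - (2 * ε j) • Pi.single j 1 ∈ signVectors ι := by
  have : ε - (2 * ε j) • Pi.single j 1 = Function.update ε j (-ε j) := by
    ext i
    rcases eq_or_ne i j with rfl | hij
    · simp only [Pi.sub_apply, Pi.smul_apply, Pi.single_eq_same, Function.update_self, smul_eq_mul]
      ring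
    · simp [hij]
  rw [this]
  exact update_mem_signVectors hε j ((abs_eq zero_le_one).1 (by
    rw [abs_neg, abs_apply_of_mem_signVectors hε]))

end SignVectors

section CubeOperators

variable {ι Y : Type*} [NormedAddCommGroup Y] [NormedSpace ℝ Y] {T : (ι → ℝ) →L[ℝ] Y}

lemma map_eq_sum_smul_map_single [Fintype ι] [DecidableEq ι] (T : (ι → ℝ) →L[ℝ] Y) (x : ι → ℝ) :
    T x = ∑ j, x j • T (Pi.single j 1) := by
  conv_lhs => rw [pi_eq_sum_univ' x]
  simp

lemma map_eq_pair_of_forall_map_single_eq_zero [Finite ι] [DecidableEq ι] {i k : ι}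
    (hik : i ≠ k)
    (hzero : ∀ j, T (Pi.single j 1) ≠ 0 → j = i ∨ j = k) (x : ι → ℝ) :
    T x = x i • T (Pi.single i 1) + x k • T (Pi.single k 1) := by
  have := Fintype.ofFinite ι
  rw [map_eq_sum_smul_map_single, ← Finset.sum_subset (Finset.subset_univ {i, k}),
    Finset.sum_pair hik]
  intro j _ hj
  rw [not_imp_comm.1 (hzero j) (by simpa using hj), smul_zero]

theorem span_suppFunctionals_eq_sup_map_tensorFunctional [Fintype ι] {T : (ι → ℝ) →L[ℝ] Y}
    (hT : ‖T‖ ≤ 1) {p m : ι → ℝ}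
    (himage : ∀ ε ∈ signVectors ι, T ε ∈ ({T p, -T p, T m, -T m} : Set Y))
    {g h : Y →L[ℝ] ℝ} (hg : suppFunctionals (T p) = {g}) (hh : suppFunctionals (T m) = {h}) :
    Submodule.span ℝ (suppFunctionals T) =
      (Submodule.span ℝ {ε ∈ signVectors ι | T ε = T p}).map (tensorFunctional g) ⊔
        (Submodule.span ℝ {ε ∈ signVectors ι | T ε = T m}).map (tensorFunctional h) := by
  have hfin : (extremePoints ℝ (closedBall (0 : ι → ℝ) 1)).Finite := by
    rw [extremePoints_closedBall_pi_s7]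
    exact finite_signVectors
  rw [span_suppFunctionals_eq_span_tensorFunctional hfin hT, extremePoints_closedBall_pi_s7,
    Submodule.map_span, Submodule.map_span, ← Submodule.span_union]
  congr 1
  ext φ
  constructor
  · rintro ⟨ε, hε, f, hf, rfl⟩
    rcases himage ε hε with hTε | hTε | hTε | (hTε : T ε = -T m) <;> rw [hTε] at hf
    · obtain rfl : f = g := by simpa [hg] using hf
      exact Or.inl ⟨ε, ⟨hε, hTε⟩, rfl⟩
    · obtain rfl : f = -g := by simpa [suppFunctionals_neg, hg] using hf
      exact Or.inl ⟨-ε, ⟨neg_mem_signVectors hε, by simp [hTε]⟩, by simp⟩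
    · obtain rfl : f = h := by simpa [hh] using hf
      exact Or.inr ⟨ε, ⟨hε, hTε⟩, rfl⟩
    · obtain rfl : f = -h := by simpa [suppFunctionals_neg, hh] using hf
      exact Or.inr ⟨-ε, ⟨neg_mem_signVectors hε, by simp [hTε]⟩, by simp⟩
  · rintro (⟨ε, ⟨hε, hTε⟩, rfl⟩ | ⟨ε, ⟨hε, hTε⟩, rfl⟩)
    · exact ⟨ε, hε, g, by simp [hTε, hg], rfl⟩
    · exact ⟨ε, hε, h, by simp [hTε, hh], rfl⟩

variable [StrictConvexSpace ℝ Y] (hT : ∀ ε ∈ signVectors ι, ‖T ε‖ = 1)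
include hT

lemma pos_of_mem_suppFunctionals [DecidableEq ι] {ε : ι → ℝ} (hε : ε ∈ signVectors ι)
    {g : Y →L[ℝ] ℝ} (hg : g ∈ suppFunctionals (T ε)) {j : ι} (hj : T (Pi.single j 1) ≠ 0) :
    0 < ε j * g (T (Pi.single j 1)) := by
  let ε' := ε - (2 * ε j) • Pi.single j 1
  have hε' : ‖T ε'‖ = 1 := hT _ (flip_mem_signVectors hε j)
  have hε0 : ε j ≠ 0 := abs_pos.1 (by simp [abs_apply_of_mem_signVectors hε j])
  have hTne : T ε ≠ T ε' := by simpa [ε', eq_comm (a := T ε)] using ⟨hε0, hj⟩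
  have hgε' : g (T ε') = 1 - 2 * (ε j * g (T (Pi.single j 1))) := by
    simp [ε', hg.2, mul_assoc]
  have hle : g (T ε') ≤ 1 := hε' ▸ apply_le_norm_of_mem_suppFunctionals hg (T ε')
  have hlt : g (T ε') < 1 :=
    hle.lt_of_ne fun h => hTne (eq_of_mem_suppFunctionals (hT ε hε) hε' hg h)
  linarith

lemma smul_map_single_eq_zero [Finite ι] [DecidableEq ι] {x : ι → ℝ} (hx : T x = 0) (j : ι) :
    x j • T (Pi.single j 1) = 0 := by
  have := Fintype.ofFinite ι
  let ε : ι → ℝ := fun j => if 0 ≤ x j then 1 else -1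
  have hε : ε ∈ signVectors ι := fun j => ite_eq_or_eq _ _ _
  have hxε (j : ι) : x j = |x j| * ε j := by
    by_cases h : 0 ≤ x j
    · simp [ε, h, abs_of_nonneg h]
    · simp [ε, h, abs_of_neg (not_le.1 h)]
  obtain ⟨g, hg⟩ := suppFunctionals_nonempty (hT ε hε)
  have hnonneg (j : ι) : 0 ≤ |x j| * (ε j * g (T (Pi.single j 1))) := by
    by_cases hj : T (Pi.single j 1) = 0
    · simp [hj]
    · exact mul_nonneg (abs_nonneg _) (pos_of_mem_suppFunctionals hT hε hg hj).le
  have hsum : ∑ j, |x j| * (ε j * g (T (Pi.single j 1))) = 0 := by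
    simp_rw [← mul_assoc, ← hxε]
    simpa [map_eq_sum_smul_map_single T x] using congrArg g hx
  have hterm := (Finset.sum_eq_zero_iff_of_nonneg fun j _ => hnonneg j).1 hsum j (Finset.mem_univ j)
  by_contra! hne
  obtain ⟨hxj, hj⟩ := smul_ne_zero_iff.1 hne
  exact (mul_pos (abs_pos.2 hxj) (pos_of_mem_suppFunctionals hT hε hg hj)).ne' hterm

lemma ker_eq_span_single [Finite ι] [DecidableEq ι] :
    LinearMap.ker (T : (ι → ℝ) →ₗ[ℝ] Y) = Submodule.span ℝ
      (range fun j : {j // T (Pi.single j 1) = 0} => (Pi.single j.1 1 : ι → ℝ)) := by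
  refine le_antisymm (fun x hx => ?_) (Submodule.span_le.2 ?_)
  · have := Fintype.ofFinite ι
    rw [pi_eq_sum_univ' x]
    refine Submodule.sum_mem _ fun j _ => ?_
    rcases smul_eq_zero.1 (smul_map_single_eq_zero hT hx j) with hxj | hj
    · simp [hxj]
    · exact Submodule.smul_mem _ _ (Submodule.subset_span ⟨⟨j, hj⟩, rfl⟩)
  · rintro _ ⟨j, rfl⟩
    exact j.2

variable [Finite ι]

lemma ncard_map_single_ne_zero_eq_finrank_range [DecidableEq ι] :
    {j | T (Pi.single j 1) ≠ 0}.ncard =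
      finrank ℝ (LinearMap.range (T : (ι → ℝ) →ₗ[ℝ] Y)) := by
  classical
  have := Fintype.ofFinite ι
  have hind : LinearIndependent ℝ
      (fun j : {j // T (Pi.single j 1) = 0} => (Pi.single j.1 1 : ι → ℝ)) := by
    simpa [Function.comp_def] using
      (Pi.basisFun ℝ ι).linearIndependent.comp _ Subtype.val_injective
  have hker : finrank ℝ (LinearMap.ker (T : (ι → ℝ) →ₗ[ℝ] Y)) =
      {j | T (Pi.single j 1) = 0}.ncard := by
    rw [ker_eq_span_single hT, finrank_span_eq_card hind, ← Nat.card_eq_fintype_card]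
    rfl
  have hnullity := LinearMap.finrank_range_add_finrank_ker (T : (ι → ℝ) →ₗ[ℝ] Y)
  have hcompl := ncard_add_ncard_compl {j | T (Pi.single j 1) = 0}
  rw [finrank_fintype_fun_eq_card, ← Nat.card_eq_fintype_card, hker] at hnullity
  rw [compl_ofPred] at hcompl
  lia

lemma span_signVectors_fiber {σ : ι → ℝ} (hσ : σ ∈ signVectors ι) :
    Submodule.span ℝ {ε ∈ signVectors ι | T ε = T σ} =
      LinearMap.ker (T : (ι → ℝ) →ₗ[ℝ] Y) ⊔ Submodule.span ℝ {σ} := by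
  classical
  have hσmem : σ ∈ Submodule.span ℝ {ε ∈ signVectors ι | T ε = T σ} :=
    Submodule.subset_span ⟨hσ, rfl⟩
  refine le_antisymm (Submodule.span_le.2 ?_) (sup_le ?_ (by simpa using hσmem))
  · rintro ε ⟨-, hε⟩
    exact Submodule.mem_sup.2 ⟨ε - σ, by simp [hε], σ, Submodule.mem_span_singleton_self σ,
      sub_add_cancel ε σ⟩
  · rw [ker_eq_span_single hT, Submodule.span_le]
    rintro _ ⟨⟨j, hj⟩, rfl⟩
    have hσj : 2 * σ j ≠ 0 :=
      mul_ne_zero two_ne_zero (abs_pos.1 (by simp [abs_apply_of_mem_signVectors hσ j]))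
    have hflip : σ - (2 * σ j) • Pi.single j 1 ∈
        Submodule.span ℝ {ε ∈ signVectors ι | T ε = T σ} :=
      Submodule.subset_span ⟨flip_mem_signVectors hσ j, by simp [hj]⟩
    rw [SetLike.mem_coe, ← Submodule.smul_mem_iff _ hσj]
    simpa using Submodule.sub_mem _ hσmem hflip

lemma finrank_span_signVectors_fiber {σ : ι → ℝ} (hσ : σ ∈ signVectors ι) :
    finrank ℝ (Submodule.span ℝ {ε ∈ signVectors ι | T ε = T σ}) =
      finrank ℝ (LinearMap.ker (T : (ι → ℝ) →ₗ[ℝ] Y)) + 1 := by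
  have hTσ : T σ ≠ 0 := norm_ne_zero_iff.1 (by simp [hT σ hσ])
  rw [span_signVectors_fiber hT hσ, Submodule.finrank_sup_span_singleton (by simpa using hTσ)]

lemma exists_signVectors_image_subset_of_finrank_range_eq_two
    (hrank : finrank ℝ (LinearMap.range (T : (ι → ℝ) →ₗ[ℝ] Y)) = 2) :
    ∃ p ∈ signVectors ι, ∃ m ∈ signVectors ι, T p ≠ T m ∧ T p ≠ -T m ∧
      ∀ ε ∈ signVectors ι, T ε ∈ ({T p, -T p, T m, -T m} : Set Y) := by
  classical
  obtain ⟨i, k, hik, hpair⟩ : ∃ i k, i ≠ k ∧ ∀ j, T (Pi.single j 1) ≠ 0 ↔ j = i ∨ j = k := by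
    rw [← ncard_map_single_ne_zero_eq_finrank_range hT, ncard_eq_two] at hrank
    simpa [Set.ext_iff] using hrank
  have hTx := map_eq_pair_of_forall_map_single_eq_zero hik fun j => (hpair j).1
  have hi : T (Pi.single i 1) ≠ 0 := (hpair i).2 (Or.inl rfl)
  have hk : T (Pi.single k 1) ≠ 0 := (hpair k).2 (Or.inr rfl)
  have : IsAddTorsionFree Y := .of_isTorsionFree ℝ Y
  let m : ι → ℝ := Function.update 1 k (-1)
  have hone : (1 : ι → ℝ) ∈ signVectors ι := fun _ => Or.inl rfl
  have hTp : T 1 = T (Pi.single i 1) + T (Pi.single k 1) := by simp [hTx 1]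
  have hTm : T m = T (Pi.single i 1) - T (Pi.single k 1) := by
    simp [hTx m, m, hik, sub_eq_add_neg]
  refine ⟨1, hone, m, update_mem_signVectors hone k (Or.inr rfl), ?_, ?_, fun ε hε => ?_⟩
  · rw [hTp, hTm, sub_eq_add_neg]
    simpa only [ne_eq, add_right_inj, self_eq_neg] using hk
  · rw [hTp, hTm, neg_sub, sub_eq_add_neg, add_comm]
    simpa only [ne_eq, add_right_inj, self_eq_neg] using hi
  · rw [hTp, hTm, hTx ε]
    rcases hε i with hεi | hεi <;> rcases hε k with hεk | hεk <;>
      simp [hεi, hεk, sub_eq_add_neg, add_comm]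

end CubeOperators

theorem stmt_7_general {ι Y : Type*} [Fintype ι] [NormedAddCommGroup Y] [NormedSpace ℝ Y]
    [StrictConvexSpace ℝ Y] (T : (ι → ℝ) →L[ℝ] Y) (hT : ∀ ε ∈ signVectors ι, ‖T ε‖ = 1)
    (hsmooth : ∀ ε ∈ signVectors ι, ∃ g, suppFunctionals (T ε) = {g})
    (hrank : finrank ℝ (LinearMap.range (T : (ι → ℝ) →ₗ[ℝ] Y)) = 2) :
    finrank ℝ (Submodule.span ℝ (suppFunctionals T)) = 2 * Fintype.card ι - 2 := by
  obtain ⟨p, hp, m, hm, hne, hne_neg, himage⟩ :=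
    exists_signVectors_image_subset_of_finrank_range_eq_two hT hrank
  obtain ⟨g, hg⟩ := hsmooth p hp
  obtain ⟨h, hh⟩ := hsmooth m hm
  have hnorm : ‖T‖ ≤ 1 := opNorm_le_of_forall_mem_extremePoints zero_le_one fun ε hε =>
    (hT ε (by rwa [← extremePoints_closedBall_pi_s7])).le
  have hgh : LinearIndependent ℝ ![g, h] := linearIndependent_pair_of_mem_suppFunctionals
    (hT p hp) (hT m hm) hne hne_neg (by simp [hg]) (by simp [hh])
  have hnullity := LinearMap.finrank_range_add_finrank_ker (T : (ι → ℝ) →ₗ[ℝ] Y)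
  rw [hrank, finrank_fintype_fun_eq_card] at hnullity
  rw [span_suppFunctionals_eq_sup_map_tensorFunctional hnorm himage hg hh,
    finrank_sup_map_tensorFunctional hgh, finrank_span_signVectors_fiber hT hp,
    finrank_span_signVectors_fiber hT hm]
  lia

theorem stmt_7 {n : ℕ} {Y : Type*} [NormedAddCommGroup Y] [NormedSpace ℝ Y]
    [FiniteDimensional ℝ Y] (hY : finrank ℝ Y = 2)
    [StrictConvexSpace ℝ Y]
    (hYsmooth : ∀ y ∈ sphere (0 : Y) 1, ∃ g, suppFunctionals y = {g})
    (T : (Fin n → ℝ) →L[ℝ] Y) (hT : ‖T‖ = 1)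
    (hMT : extremePoints ℝ (closedBall (0 : Fin n → ℝ) 1) ⊆
      {x ∈ sphere (0 : Fin n → ℝ) 1 | ‖T x‖ = ‖T‖})
    (hrank : finrank ℝ (LinearMap.range (T : (Fin n → ℝ) →ₗ[ℝ] Y)) = 2) :
    finrank ℝ (Submodule.span ℝ (suppFunctionals T)) = 2 * n - 2 := by
  have hT_signs : ∀ ε ∈ signVectors (Fin n), ‖T ε‖ = 1 := fun ε hε =>
    (hMT (by rwa [extremePoints_closedBall_pi_s7])).2.trans hT
  simpa using stmt_7_general T hT_signs
    (fun ε hε => hYsmooth _ (by simpa using hT_signs ε hε)) hrank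
end
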